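/- arXiv:2306.07161 — 2 statements merged into one kernel-verified Lean document; each statement's English description precedes it below -/
import Mathlib

section
/- Assume n ≥ 2 and d ≥ 5, and set x := 1 + ⌈nd/2⌉. Let T = T_1 ∪ ⋯ ∪ T_s ⊂ P^n, s ≥ 2, be a reducible rational normal curve, and suppose there exists S ∈ T(n,d;x)' with S ⊂ T. Set n_i := deg(T_i) and x_i := #(S ∩ T_i). Then: (1) S ⊂ T_reg (S avoids the singular points of T); (2) n is even and d is odd; (3) every final component T_i of T has n_i odd and 2x_i = n_i·d + 1. -/
open MvPolynomial

noncomputable section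

/-- Projective `n`-space over `k`, as the projectivization of `k^(n+1)`. -/
abbrev ProjSpace (k : Type*) [Field k] (n : ℕ) := Projectivization k (Fin (n+1) → k)

variable (k : Type*) [Field k]

/-- Evaluation at a vector, as a linear map on polynomials. -/
def evalLM {n : ℕ} (v : Fin n → k) : MvPolynomial (Fin n) k →ₗ[k] k :=
  (MvPolynomial.aeval v).toLinearMap

/-- The submodule of polynomials vanishing together with all first partial derivatives at `v`. -/
def doubleVanishing {n : ℕ} (v : Fin n → k) : Submodule k (MvPolynomial (Fin n) k) :=
  LinearMap.ker (evalLM k v) ⊓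
    ⨅ i : Fin n, LinearMap.ker ((evalLM k v).comp (MvPolynomial.pderiv i).toLinearMap)

/-- `h^0(I_{2S}(d))`: dimension of degree-`d` forms vanishing doubly at all points of `S`. -/
def h0 (n d : ℕ) (S : Finset (ProjSpace k n)) : ℕ :=
  Module.finrank k
    ↥(homogeneousSubmodule (Fin (n+1)) k d ⊓ ⨅ p ∈ S, doubleVanishing k p.rep)

/-- `h^1(I_{2S}(d)) = h^0(I_{2S}(d)) + (n+1)#S - C(n+d,n)`. -/
def h1 (n d : ℕ) (S : Finset (ProjSpace k n)) : ℤ :=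
  (h0 k n d S : ℤ) + (n+1) * S.card - (n+d).choose n

/-- `S` spans `P^n`: it is contained in no hyperplane. -/
def Spans (n : ℕ) (S : Finset (ProjSpace k n)) : Prop :=
  Submodule.span k (Projectivization.rep '' (S : Set (ProjSpace k n))) = ⊤

/-- The Terracini locus `T(n,d;x)`. -/
def Terracini (n d x : ℕ) : Set (Finset (ProjSpace k n)) :=
  {S | S.card = x ∧ Spans k n S ∧ 0 < h0 k n d S ∧ 0 < h1 k n d S}

/-- The minimally Terracini locus `T(n,d;x)'`. -/
def minTerracini (n d x : ℕ) : Set (Finset (ProjSpace k n)) :=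
  {S | S ∈ Terracini k n d x ∧ ∀ A : Finset (ProjSpace k n), A ⊂ S → h1 k n d A = 0}

end
/-- The `i`-th coordinate `s^(n-i) t^i` of the standard rational normal curve of degree `n`. -/
def stdRNCvec (k : Type*) [Field k] (n : ℕ) (s t : k) : Fin (n+1) → k :=
  fun i => s ^ (n - (i : ℕ)) * t ^ (i : ℕ)

/-- The standard rational normal curve in `P^n`: the image of
`[s:t] ↦ [s^n : s^(n-1)t : ⋯ : t^n]`. -/
def stdRNC (k : Type*) [Field k] (n : ℕ) : Set (ProjSpace k n) :=
  {p | ∃ s t : k, (s ≠ 0 ∨ t ≠ 0) ∧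
    Projectivization.submodule p = Submodule.span k {stdRNCvec k n s t}}

/-- A rational normal curve in `P^n`: a curve projectively equivalent to the standard one. -/
def IsRNC (k : Type*) [Field k] (n : ℕ) (C : Set (ProjSpace k n)) : Prop :=
  ∃ g : (Fin (n+1) → k) ≃ₗ[k] (Fin (n+1) → k),
    C = {p | ∃ s t : k, (s ≠ 0 ∨ t ≠ 0) ∧
      Projectivization.submodule p = Submodule.span k {g (stdRNCvec k n s t)}}

/-- Data for a reducible rational normal curve in `P^n`: a union of `s ≥ 2` irreducible
components, the `i`-th being a rational normal curve of degree `deg i` embedded in its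
linear span via an injective linear map `emb i`. -/
structure RedRNC (k : Type*) [Field k] (n : ℕ) where
  s : ℕ
  two_le_s : 2 ≤ s
  deg : Fin s → ℕ
  deg_pos : ∀ i, 0 < deg i
  sum_deg : ∑ i, deg i = n
  emb : ∀ i, (Fin (deg i + 1) → k) →ₗ[k] (Fin (n+1) → k)
  emb_inj : ∀ i, Function.Injective (emb i)

namespace RedRNC

variable {k : Type*} [Field k] {n : ℕ}

/-- The `i`-th irreducible component: a rational normal curve in its linear span. -/
def comp (T : RedRNC k n) (i : Fin T.s) : Set (ProjSpace k n) :=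
  Projectivization.map (T.emb i) (T.emb_inj i) '' stdRNC k (T.deg i)

/-- The underlying reduced curve: the union of the components. -/
def curve (T : RedRNC k n) : Set (ProjSpace k n) := ⋃ i, T.comp i

/-- `T` is a genuine reducible rational normal curve: the components are pairwise distinct
(the curve is reduced and reducible of degree `n`), the curve is connected, and it spans
`P^n`. -/
def IsGood (T : RedRNC k n) : Prop :=
  (∀ i j, i ≠ j → T.comp i ≠ T.comp j) ∧
  (∀ I : Finset (Fin T.s), I.Nonempty → I ≠ Finset.univ →
    ∃ i ∈ I, ∃ j ∉ I, (T.comp i ∩ T.comp j).Nonempty) ∧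
  Submodule.span k (Projectivization.rep '' T.curve) = ⊤

/-- The singular locus of the curve: the points lying on at least two components. -/
def sing (T : RedRNC k n) : Set (ProjSpace k n) :=
  {p | ∃ i j, i ≠ j ∧ p ∈ T.comp i ∧ p ∈ T.comp j}

/-- The smooth locus of the curve. -/
def reg (T : RedRNC k n) : Set (ProjSpace k n) := T.curve \ T.sing

/-- A final component: an irreducible component containing exactly one singular point. -/
def Final (T : RedRNC k n) (i : Fin T.s) : Prop :=
  (T.comp i ∩ T.sing).ncard = 1

end RedRNC

/-!
Restricting forms of degree `d` to a connected subcurve of degree `m` of `T` has rank at most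
`d m + 1`: a component of degree `mᵢ` contributes at most the `d mᵢ + 1` binary forms of degree
`d mᵢ`, and one condition is saved whenever a component is attached at a point of the previous ones.
A form vanishing on the subcurve is killed at each of its points by two independent directions (the
point itself, by Euler, and a tangent vector), so a double point imposes at most `n - 1` further
conditions on such forms. Hence `2 #A ≤ d m + 1 + h¹(A)` for every finite set `A` on the subcurve.

By the same attaching argument a proper connected subcurve lies in a hyperplane, so it cannot
contain the spanning set `S`, and minimality makes `h¹` vanish for the part of `S` on it. When `T`
is split into two complementary connected subcurves of degrees `a + b = n`, the two parts of `S`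
thus have at most `(d a + 1) / 2` and `(d b + 1) / 2` points, while `2 #S ≥ n d + 2`. So both
bounds are equalities and the parts are disjoint, which forces `d`, `a` and `b` to be odd. Any two
components are separated by such a splitting, and removing a final component leaves a connected
curve because all its neighbours pass through its single singular point.
-/

lemma odd_of_two_mul_eq_mul_add_one {c a d : ℕ} (h : 2 * c = a * d + 1) : Odd a ∧ Odd d :=
  Nat.odd_mul.1 (by rw [← Nat.not_even_iff_odd, Nat.even_iff]; omega)

section LinearAlgebra

variable {K V W ι : Type*} [Field K] [AddCommGroup V] [Module K V] [AddCommGroup W] [Module K W]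

lemma finrank_le_finrank_inf_ker_add_finrank (f : V →ₗ[K] W) {A : Submodule K V}
    [FiniteDimensional K A] {B : Submodule K W} [FiniteDimensional K B] (hAB : A.map f ≤ B) :
    Module.finrank K A ≤ Module.finrank K ↥(A ⊓ LinearMap.ker f) + Module.finrank K B := by
  have hrank := LinearMap.finrank_range_add_finrank_ker (f.domRestrict A)
  have hker : Module.finrank K (LinearMap.ker (f.domRestrict A)) =
      Module.finrank K ↥(A ⊓ LinearMap.ker f) := by
    rw [LinearMap.ker_domRestrict, ← Submodule.finrank_map_subtype_eq,
      Submodule.map_comap_subtype]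
  rw [LinearMap.range_domRestrict, hker] at hrank
  have hmono := Submodule.finrank_mono hAB
  omega

lemma linearIndependent_pair_of_apply {x y : ι → K} {a b : ι} (hxa : x a ≠ 0) (hya : y a = 0)
    (hyb : y b ≠ 0) : LinearIndependent K ![x, y] := by
  refine LinearIndependent.pair_iff.2 fun s t hst => ?_
  have hs : s = 0 := by simpa [hxa, hya] using congrFun hst a
  exact ⟨hs, by simpa [hs, hyb] using congrFun hst b⟩

end LinearAlgebra

section Forms

variable {σ R : Type*} [CommRing R]

lemma eval_smul_of_isHomogeneous {F : MvPolynomial σ R} {d : ℕ}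
    (hF : F.IsHomogeneous d) (c : R) (v : σ → R) : eval (c • v) F = c ^ d * eval v F := by
  rw [eval_eq, eval_eq, Finset.mul_sum]
  refine Finset.sum_congr rfl fun m hm => ?_
  simp only [Pi.smul_apply, smul_eq_mul, mul_pow, Finset.prod_mul_distrib,
    Finset.prod_pow_eq_pow_sum, hF.degree_eq_sum_deg_support hm]
  ring

instance finite_homogeneousSubmodule [Finite σ] (d : ℕ) :
    Module.Finite R (homogeneousSubmodule σ R d) :=
  Module.Finite.iff_fg.2 (homogeneousSubmodule_fg σ R d)

lemma finrank_homogeneousSubmodule_fin [Nontrivial R] (n d : ℕ) :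
    Module.finrank R (homogeneousSubmodule (Fin (n + 1)) R d) = (n + d).choose n := by
  have hset : {m : Fin (n + 1) →₀ ℕ | m.degree = d} =
      ((Finset.univ : Finset (Fin (n + 1))).finsuppAntidiag d : Set (Fin (n + 1) →₀ ℕ)) := by
    ext m
    simp [Finsupp.degree_eq_sum, Finset.mem_finsuppAntidiag]
  rw [homogeneousSubmodule_eq_finsupp_supported, hset,
    (AddMonoidAlgebra.supportedEquivFinsupp _).finrank_eq, Module.finrank_finsupp_self]
  simp only [Finset.coe_sort_coe, Fintype.card_coe, Finset.card_finsuppAntidiag_nat_eq_choose,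
    Finset.card_univ, Fintype.card_fin]
  rw [show n + 1 + d - 1 = n + d by omega, Nat.choose_symm_add]

lemma finrank_homogeneousSubmodule_fin_two [Nontrivial R] (d : ℕ) :
    Module.finrank R (homogeneousSubmodule (Fin 2) R d) = d + 1 := by
  rw [finrank_homogeneousSubmodule_fin, Nat.choose_one_right, add_comm]

lemma finrank_homogeneousSubmodule_inf_ker_aeval_lt {k : Type*} [Field k] [Finite σ] (d : ℕ)
    {q : σ → k} (hq : q ≠ 0) :
    Module.finrank k ↥(homogeneousSubmodule σ k d ⊓ LinearMap.ker (aeval (R := k) q).toLinearMap) <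
      Module.finrank k (homogeneousSubmodule σ k d) := by
  obtain ⟨i, hi⟩ := Function.ne_iff.1 hq
  refine Submodule.finrank_lt_finrank_of_lt (inf_le_left.lt_of_not_ge fun hle => ?_)
  have hX := (hle (isHomogeneous_X_pow i d)).2
  exact pow_ne_zero d hi (by simpa using hX)

lemma eval_aeval {τ : Type*} (φ : σ → MvPolynomial τ R) (F : MvPolynomial σ R) (q : τ → R) :
    eval q (aeval φ F) = eval (fun l => eval q (φ l)) F :=
  aeval_bind₁ q φ F

lemma derivation_aeval_eq_sum [Fintype σ] {A M : Type*} [CommRing A] [Algebra R A]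
    [AddCommGroup M] [Module A M] [Module R M] (D : Derivation R A M)
    (φ : σ → A) (F : MvPolynomial σ R) :
    D (aeval φ F) = ∑ l, aeval φ (pderiv l F) • D (φ l) := by
  classical
  induction F using MvPolynomial.induction_on with
  | C a => simp
  | add p q hp hq => simp [hp, hq, add_smul, Finset.sum_add_distrib]
  | mul_X p i hp =>
    simp only [map_mul, aeval_X, Derivation.leibniz, hp, smul_eq_mul, map_add, pderiv_X,
      add_smul, Finset.sum_add_distrib, mul_smul, Finset.smul_sum]
    simp [Pi.single_apply, apply_ite (aeval φ), ite_smul]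

/-- The differential at the point `v` of the function defined by a polynomial. It packages the
partial derivatives into one linear map, whose rank counts the conditions of a double point. -/
noncomputable def differentialAt [Fintype σ] (v : σ → R) :
    MvPolynomial σ R →ₗ[R] Module.Dual R (σ → R) :=
  ∑ l, ((aeval v).toLinearMap ∘ₗ (pderiv l).toLinearMap).smulRight (LinearMap.proj l)

variable [Fintype σ]

lemma differentialAt_apply (v w : σ → R) (F : MvPolynomial σ R) :
    differentialAt v F w = ∑ l, eval v (pderiv l F) * w l := by
  simp [differentialAt, aeval_eq_eval]

lemma differentialAt_apply_self {F : MvPolynomial σ R} {d : ℕ} (hF : F.IsHomogeneous d)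
    (v : σ → R) : differentialAt v F v = d * eval v F := by
  have heuler := congrArg (eval v) hF.sum_X_mul_pderiv
  simpa [differentialAt_apply, mul_comm] using heuler

lemma differentialAt_smul {F : MvPolynomial σ R} {d : ℕ} (hF : F.IsHomogeneous d) (c : R)
    (v : σ → R) : differentialAt (c • v) F = c ^ (d - 1) • differentialAt v F := by
  ext1 w
  simp only [LinearMap.smul_apply, differentialAt_apply, smul_eq_mul, Finset.mul_sum,
    eval_smul_of_isHomogeneous hF.pderiv, mul_assoc]

lemma differentialAt_eq_zero_iff {v : σ → R} {F : MvPolynomial σ R} :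
    differentialAt v F = 0 ↔ ∀ l, eval v (pderiv l F) = 0 := by
  classical
  refine ⟨fun h l => ?_, fun h => LinearMap.ext fun w => ?_⟩
  · simpa [differentialAt_apply, Pi.single_apply] using LinearMap.congr_fun h (Pi.single l 1)
  · simp [differentialAt_apply, h]

lemma eval_pderiv_aeval {τ : Type*} (φ : σ → MvPolynomial τ R) (F : MvPolynomial σ R) (q : τ → R)
    (i : τ) : eval q (pderiv i (aeval φ F)) =
      differentialAt (fun l => eval q (φ l)) F (fun l => eval q (pderiv i (φ l))) := by
  rw [derivation_aeval_eq_sum, map_sum, differentialAt_apply]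
  refine Finset.sum_congr rfl fun l _ => ?_
  rw [smul_eq_mul, map_mul, eval_aeval]

end Forms

section Graph

variable {V : Type*} {G : SimpleGraph V}

lemma connected_of_forall_exists_adj [Nonempty V]
    (hcut : ∀ I : Set V, I.Nonempty → I ≠ Set.univ → ∃ a ∈ I, ∃ b ∉ I, G.Adj a b) :
    G.Connected := by
  obtain ⟨v⟩ := ‹Nonempty V›
  refine G.connected_iff_exists_forall_reachable.2 ⟨v, ?_⟩
  by_contra! hne
  obtain ⟨w, hw⟩ := hne
  obtain ⟨a, ha, b, hb, hab⟩ := hcut {u | G.Reachable v u} ⟨v, .refl v⟩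
    fun h => hw (Set.eq_univ_iff_forall.1 h w)
  exact hb (ha.trans hab.reachable)

lemma connected_induce_singleton (v : V) : (G.induce {v}).Connected :=
  SimpleGraph.Connected.of_subsingleton

lemma exists_adj_of_connected_induce {I J : Set V} (hI : (G.induce I).Connected)
    (hJI : J ⊂ I) (hJ : J.Nonempty) : ∃ a ∈ J, ∃ b ∈ I, b ∉ J ∧ G.Adj a b := by
  obtain ⟨u, huJ⟩ := hJ
  obtain ⟨v, hvI, hvJ⟩ := Set.exists_of_ssubset hJI
  obtain ⟨p⟩ := hI.preconnected ⟨u, hJI.subset huJ⟩ ⟨v, hvI⟩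
  obtain ⟨e, -, ha, hb⟩ := p.exists_boundary_dart (Subtype.val ⁻¹' J) huJ hvJ
  exact ⟨e.fst, ha, e.snd, e.snd.2, hb, e.adj⟩

@[elab_as_elim]
lemma connected_induce_induction [DecidableEq V] {P : Finset V → Prop} {I : Finset V}
    (hI : (G.induce (I : Set V)).Connected) (singleton : ∀ i, P {i})
    (insert : ∀ J, ∀ a ∈ J, ∀ b ∉ J, G.Adj a b → P J → P (insert b J)) : P I := by
  classical
  obtain ⟨i, hi⟩ := hI.nonempty
  obtain ⟨J, hiJ, hJ⟩ := (I.powerset.filter P).exists_le_maximal (a := {i})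
    (by simpa [singleton] using hi)
  obtain ⟨hJI, hPJ⟩ : J ⊆ I ∧ P J := by simpa using hJ.prop
  obtain rfl | hne := eq_or_ne J I
  · exact hPJ
  obtain ⟨a, haJ, b, hbI, hbJ, hab⟩ := exists_adj_of_connected_induce hI
    (Finset.coe_ssubset.2 (hJI.ssubset_of_ne hne)) ⟨i, by simpa using hiJ⟩
  have hmem : Insert.insert b J ∈ I.powerset.filter P := by
    simpa [Finset.insert_subset_iff, hJI] using ⟨hbI, insert J a haJ b hbJ hab hPJ⟩
  exact absurd (hJ.le_of_ge hmem (Finset.subset_insert b J) (Finset.mem_insert_self b J)) hbJ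

/-- Vertices that can be reached from `i` without passing through `j`. This set and its complement
split a connected graph into two connected parts. -/
def reachableAvoiding (G : SimpleGraph V) (i j : V) : Set V :=
  {v | ∃ p : G.Walk i v, j ∉ p.support}

lemma connected_induce_reachableAvoiding {i j : V} (hij : i ≠ j) :
    (G.induce (reachableAvoiding G i j)).Connected := by
  classical
  refine G.induce_connected_of_patches i ⟨.nil, by simpa using hij.symm⟩ ?_
  rintro v ⟨p, hp⟩
  refine ⟨{u | u ∈ p.support}, fun u hu => ⟨p.takeUntil u hu, fun hj => ?_⟩, p.start_mem_support,
    p.end_mem_support, p.connected_induce_support.preconnected _ _⟩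
  exact hp (p.support_takeUntil_subset_support hu hj)

lemma connected_induce_compl_reachableAvoiding (hG : G.Connected) (i j : V) :
    (G.induce (reachableAvoiding G i j)ᶜ).Connected := by
  classical
  refine G.induce_connected_of_patches j (fun ⟨p, hp⟩ => hp p.end_mem_support) fun {v} hv => ?_
  obtain ⟨p, hp⟩ := hG.preconnected.exists_isPath v j
  refine ⟨{u | u ∈ p.support}, fun u hu ⟨r, hr⟩ => ?_, p.end_mem_support, p.start_mem_support,
    p.connected_induce_support.preconnected _ _⟩
  have hju : u ≠ j := fun h => hr (h ▸ r.end_mem_support)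
  have hjp := SimpleGraph.Walk.endpoint_notMem_support_takeUntil hp hu hju.symm
  exact hv ⟨r.append (p.takeUntil u hu).reverse, by
    simp [SimpleGraph.Walk.mem_support_append_iff, hr, hjp]⟩

lemma exists_connected_induce_and_compl (hG : G.Connected) {i j : V} (hij : i ≠ j) :
    ∃ I : Set V, i ∈ I ∧ j ∉ I ∧ (G.induce I).Connected ∧ (G.induce Iᶜ).Connected :=
  ⟨reachableAvoiding G i j, ⟨.nil, by simpa using hij.symm⟩, fun ⟨p, hp⟩ => hp p.end_mem_support,
    connected_induce_reachableAvoiding hij, connected_induce_compl_reachableAvoiding hG i j⟩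

-- The last hypothesis also covers walks starting at `i`, so that the induction can skip `i`.
lemma reachable_induce_compl_singleton_of_isClique_neighborSet {i : V}
    (hi : G.IsClique (G.neighborSet i)) {u v : V} (p : G.Walk u v) (hv : v ∈ ({i}ᶜ : Set V)) :
    ∀ a (ha : a ∈ ({i}ᶜ : Set V)), a = u ∨ u = i ∧ G.Adj i a →
      (G.induce {i}ᶜ).Reachable ⟨a, ha⟩ ⟨v, hv⟩ := by
  induction p with
  | nil =>
    rintro a ha (rfl | ⟨rfl, -⟩)
    · rfl
    · exact absurd rfl hv
  | @cons u w v huw p ih =>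
    rintro a ha (rfl | ⟨rfl, hia⟩)
    · obtain rfl | hwi := eq_or_ne w i
      · exact ih hv a ha (.inr ⟨rfl, huw.symm⟩)
      · have haw : (G.induce {i}ᶜ).Adj ⟨a, ha⟩ ⟨w, hwi⟩ := huw
        exact haw.reachable.trans (ih hv w hwi (.inl rfl))
    · obtain rfl | haw := eq_or_ne a w
      · exact ih hv a ha (.inl rfl)
      · have haw : (G.induce {u}ᶜ).Adj ⟨a, ha⟩ ⟨w, huw.ne'⟩ := hi hia huw haw
        exact haw.reachable.trans (ih hv w huw.ne' (.inl rfl))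

lemma connected_induce_compl_singleton_of_isClique_neighborSet [Nontrivial V] (hG : G.Connected)
    {i : V} (hi : G.IsClique (G.neighborSet i)) : (G.induce {i}ᶜ).Connected := by
  have : Nonempty ({i}ᶜ : Set V) := Set.Nonempty.to_subtype (exists_ne i)
  refine ⟨fun u v => ?_⟩
  obtain ⟨p⟩ := hG.preconnected u.1 v.1
  exact reachable_induce_compl_singleton_of_isClique_neighborSet hi p v.2 u u.2 (.inl rfl)

end Graph

section DoublePoints

variable {k : Type*} [Field k]

lemma mem_doubleVanishing_iff {N : ℕ} {v : Fin N → k} {F : MvPolynomial (Fin N) k} :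
    F ∈ doubleVanishing k v ↔ eval v F = 0 ∧ differentialAt v F = 0 := by
  simp [doubleVanishing, evalLM, differentialAt_eq_zero_iff, aeval_eq_eval]

lemma finrank_add_two_le_finrank_inf_doubleVanishing {N d : ℕ}
    {W : Submodule k (MvPolynomial (Fin N) k)} (hW : W ≤ homogeneousSubmodule (Fin N) k d)
    {v w : Fin N → k} (hvw : LinearIndependent k ![v, w])
    (hWvw : ∀ F ∈ W, eval v F = 0 ∧ differentialAt v F w = 0) :
    Module.finrank k W + 2 ≤ Module.finrank k ↥(W ⊓ doubleVanishing k v) + N := by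
  have := Submodule.finiteDimensional_of_le hW
  have hinf : W ⊓ LinearMap.ker (differentialAt v) = W ⊓ doubleVanishing k v := by
    ext F
    simp only [Submodule.mem_inf, LinearMap.mem_ker, mem_doubleVanishing_iff]
    exact and_congr_right fun hF => (and_iff_right (hWvw F hF).1).symm
  set U := Submodule.span k (Set.range ![v, w])
  have hmap : W.map (differentialAt v) ≤ U.dualAnnihilator := by
    rintro _ ⟨F, hF, rfl⟩
    have hv : differentialAt v F v = 0 := by
      rw [differentialAt_apply_self (hW hF), (hWvw F hF).1, mul_zero]
    have hker : U ≤ LinearMap.ker (differentialAt v F) := by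
      simp [U, Submodule.span_le, Set.insert_subset_iff, hv, (hWvw F hF).2]
    exact (Submodule.mem_dualAnnihilator _).2 hker
  have hrank := finrank_le_finrank_inf_ker_add_finrank (differentialAt v) hmap
  have hann := Subspace.finrank_add_finrank_dualAnnihilator_eq U
  rw [finrank_span_eq_card hvw, Fintype.card_fin, Module.finrank_fin_fun] at hann
  rw [hinf] at hrank
  omega

lemma finrank_add_two_mul_card_le_finrank_inf_iInf_doubleVanishing {ι : Type*} {N d : ℕ}
    {W : Submodule k (MvPolynomial (Fin N) k)} (hW : W ≤ homogeneousSubmodule (Fin N) k d)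
    {v : ι → Fin N → k} {A : Finset ι}
    (hA : ∀ a ∈ A, ∃ w, LinearIndependent k ![v a, w] ∧
      ∀ F ∈ W, eval (v a) F = 0 ∧ differentialAt (v a) F w = 0) :
    Module.finrank k W + 2 * A.card ≤
      Module.finrank k ↥(W ⊓ ⨅ a ∈ A, doubleVanishing k (v a)) + N * A.card := by
  classical
  induction A using Finset.induction_on with
  | empty =>
    have hinf : W ⊓ ⨅ a ∈ (∅ : Finset ι), doubleVanishing k (v a) = W := by simp
    rw [hinf, Finset.card_empty, mul_zero, mul_zero]
  | insert a A ha ih =>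
    specialize ih fun b hb => hA b (Finset.mem_insert_of_mem hb)
    obtain ⟨w, hvw, hWvw⟩ := hA a (Finset.mem_insert_self a A)
    have hstep := finrank_add_two_le_finrank_inf_doubleVanishing (inf_le_left.trans hW) hvw
      fun F (hF : F ∈ W ⊓ ⨅ b ∈ A, doubleVanishing k (v b)) => hWvw F hF.1
    rw [Finset.iInf_insert, inf_comm (doubleVanishing k (v a)), ← inf_assoc,
      Finset.card_insert_of_notMem ha, mul_add_one, mul_add_one]
    omega

lemma two_mul_card_le_add_h1 {n d c : ℕ} {W : Submodule k (MvPolynomial (Fin (n + 1)) k)}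
    (hW : W ≤ homogeneousSubmodule (Fin (n + 1)) k d)
    (hc : (n + d).choose n ≤ Module.finrank k W + c) {A : Finset (ProjSpace k n)}
    (hA : ∀ p ∈ A, ∃ w, LinearIndependent k ![p.rep, w] ∧
      ∀ F ∈ W, eval p.rep F = 0 ∧ differentialAt p.rep F w = 0) :
    (2 * A.card : ℤ) ≤ c + h1 k n d A := by
  have hrank := finrank_add_two_mul_card_le_finrank_inf_iInf_doubleVanishing hW hA
  have hmono : Module.finrank k ↥(W ⊓ ⨅ p ∈ A, doubleVanishing k p.rep) ≤ h0 k n d A :=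
    Submodule.finrank_mono (inf_le_inf_right _ hW)
  rw [h1]
  zify at hrank hmono hc
  linarith

end DoublePoints

section Parametrization

variable {k : Type*} [Field k]

/-- The binary forms `X₀ᵐ, X₀ᵐ⁻¹X₁, …, X₁ᵐ` parametrizing the standard rational normal curve of
degree `m`. -/
noncomputable def stdRNCForm (k : Type*) [Field k] (m : ℕ) (j : Fin (m + 1)) :
    MvPolynomial (Fin 2) k :=
  X 0 ^ (m - (j : ℕ)) * X 1 ^ (j : ℕ)

lemma isHomogeneous_stdRNCForm (m : ℕ) (j : Fin (m + 1)) : (stdRNCForm k m j).IsHomogeneous m := by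
  have h := (isHomogeneous_X_pow (R := k) (0 : Fin 2) (m - j)).mul (isHomogeneous_X_pow 1 j)
  rwa [Nat.sub_add_cancel (Nat.lt_succ_iff.1 j.2)] at h

lemma eval_stdRNCForm (m : ℕ) (q : Fin 2 → k) :
    (fun j => eval q (stdRNCForm k m j)) = stdRNCvec k m (q 0) (q 1) := by
  ext j
  simp [stdRNCForm, stdRNCvec]

lemma exists_linearIndependent_eval_pderiv_stdRNCForm {m : ℕ} (hm : 0 < m) {q : Fin 2 → k}
    (hq : q ≠ 0) : ∃ a, LinearIndependent k
      ![fun j => eval q (stdRNCForm k m j), fun j => eval q (pderiv a (stdRNCForm k m j))] := by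
  obtain hq0 | hq1 : q 0 ≠ 0 ∨ q 1 ≠ 0 := by simpa [Fin.exists_fin_two] using Function.ne_iff.1 hq
  · refine ⟨1, linearIndependent_pair_of_apply (a := 0) (b := ⟨1, by omega⟩) ?_ ?_ ?_⟩ <;>
      simp [stdRNCForm, pderiv_X, hq0]
  · refine ⟨0, linearIndependent_pair_of_apply (a := Fin.last m) (b := ⟨m - 1, by omega⟩)
      ?_ ?_ ?_⟩ <;> simp [stdRNCForm, pderiv_X, hq1, Nat.sub_sub_self (show 1 ≤ m by omega)]

end Parametrization

namespace RedRNC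

variable {k : Type*} [Field k] {n : ℕ} (T : RedRNC k n)

/-- The binary forms of degree `T.deg i` parametrizing the `i`-th component of `T`. -/
noncomputable def param (i : Fin T.s) (l : Fin (n + 1)) : MvPolynomial (Fin 2) k :=
  ∑ j, T.emb i (Pi.single j 1) l • stdRNCForm k (T.deg i) j

lemma isHomogeneous_param (i : Fin T.s) (l : Fin (n + 1)) :
    (T.param i l).IsHomogeneous (T.deg i) :=
  (homogeneousSubmodule (Fin 2) k (T.deg i)).sum_mem fun j _ =>
    Submodule.smul_mem _ _ (isHomogeneous_stdRNCForm (T.deg i) j)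

lemma apply_param (i : Fin T.s) (f : MvPolynomial (Fin 2) k →ₗ[k] k) :
    (fun l => f (T.param i l)) = T.emb i (fun j => f (stdRNCForm k (T.deg i) j)) := by
  have hsingle (j : Fin (T.deg i + 1)) : (fun l => if j = l then (1 : k) else 0) = Pi.single j 1 :=
    funext fun l => by simp only [Pi.single_apply, eq_comm]
  ext l
  rw [LinearMap.pi_apply_eq_sum_univ (T.emb i)]
  simp [param, hsingle, mul_comm]

lemma eval_param (i : Fin T.s) (q : Fin 2 → k) :
    (fun l => eval q (T.param i l)) = T.emb i (stdRNCvec k (T.deg i) (q 0) (q 1)) := by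
  rw [← eval_stdRNCForm]
  exact T.apply_param i (evalLM k q)

variable {T} {i : Fin T.s} {p : ProjSpace k n}

lemma exists_rep_eq_smul_eval_param (hp : p ∈ T.comp i) :
    ∃ q : Fin 2 → k, q ≠ 0 ∧ ∃ c : k, c ≠ 0 ∧ p.rep = c • fun l => eval q (T.param i l) := by
  obtain ⟨x, ⟨s, t, hst, hx⟩, rfl⟩ := hp
  have hv : stdRNCvec k (T.deg i) s t ≠ 0 := by
    intro h
    have hrank := x.finrank_submodule
    rw [hx, h, Submodule.span_zero_singleton, finrank_bot] at hrank
    exact zero_ne_one hrank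
  obtain rfl : x = .mk k _ hv :=
    Projectivization.submodule_injective (by rw [hx, Projectivization.submodule_mk])
  obtain ⟨c, hc⟩ := Projectivization.exists_smul_eq_mk_rep k (T.emb i (stdRNCvec k (T.deg i) s t))
    ((map_ne_zero_iff _ (T.emb_inj i)).2 hv)
  refine ⟨![s, t], fun h => ?_, c, c.ne_zero, ?_⟩
  · exact hst.elim (· (congrFun h 0)) (· (congrFun h 1))
  · rw [Projectivization.map_mk, ← hc, eval_param]
    rfl

lemma exists_eval_rep_eq (hp : p ∈ T.comp i) : ∃ q : Fin 2 → k, q ≠ 0 ∧ ∃ c : k, c ≠ 0 ∧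
    ∀ {d : ℕ} {F : MvPolynomial (Fin (n + 1)) k}, F.IsHomogeneous d →
      eval p.rep F = c ^ d * eval q (aeval (T.param i) F) := by
  obtain ⟨q, hq, c, hc0, hc⟩ := exists_rep_eq_smul_eval_param hp
  refine ⟨q, hq, c, hc0, fun hF => ?_⟩
  rw [hc, eval_smul_of_isHomogeneous hF, eval_aeval]

lemma exists_linearIndependent_differentialAt_rep_eq_zero (hp : p ∈ T.comp i) :
    ∃ w, LinearIndependent k ![p.rep, w] ∧
      ∀ {d : ℕ} {F : MvPolynomial (Fin (n + 1)) k}, F.IsHomogeneous d →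
        aeval (T.param i) F = 0 → differentialAt p.rep F w = 0 := by
  obtain ⟨q, hq, c, hc0, hc⟩ := exists_rep_eq_smul_eval_param hp
  obtain ⟨a, ha⟩ := exists_linearIndependent_eval_pderiv_stdRNCForm (T.deg_pos i) hq
  have hli : LinearIndependent k
      ![fun l => eval q (T.param i l), fun l => eval q (pderiv a (T.param i l))] := by
    have hcomp : ![fun l => eval q (T.param i l), fun l => eval q (pderiv a (T.param i l))] =
        T.emb i ∘ ![fun j => eval q (stdRNCForm k (T.deg i) j),
          fun j => eval q (pderiv a (stdRNCForm k (T.deg i) j))] := by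
      funext b
      fin_cases b
      exacts [T.apply_param i (evalLM k q),
        T.apply_param i (evalLM k q ∘ₗ (pderiv a).toLinearMap)]
    rw [hcomp]
    exact ha.map' (T.emb i) (LinearMap.ker_eq_bot.2 (T.emb_inj i))
  refine ⟨c • fun l => eval q (pderiv a (T.param i l)), ?_, fun {d F} hF hFi => ?_⟩
  · rw [hc]
    exact (LinearIndependent.pair_smul_iff hc0).2 hli
  · rw [hc, differentialAt_smul hF, LinearMap.smul_apply, map_smul,
      ← eval_pderiv_aeval, hFi]
    simp

variable (T)

/-- The graph on the components of `T` in which two distinct components are adjacent when they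
meet. -/
def componentGraph : SimpleGraph (Fin T.s) where
  Adj i j := i ≠ j ∧ (T.comp i ∩ T.comp j).Nonempty
  symm := ⟨fun i j h => ⟨h.1.symm, Set.inter_comm (T.comp i) (T.comp j) ▸ h.2⟩⟩
  loopless := ⟨fun _ h => h.1 rfl⟩

/-- The union of the components of `T` with index in `I`. -/
def subcurve (I : Finset (Fin T.s)) : Set (ProjSpace k n) := ⋃ i ∈ I, T.comp i

/-- The linear span of the components of `T` with index in `I`. -/
def linearSpan (I : Finset (Fin T.s)) : Submodule k (Fin (n + 1) → k) :=
  ⨆ i ∈ I, LinearMap.range (T.emb i)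

/-- The forms of degree `d` that vanish identically on the components of `T` with index in `I`.
Vanishing is tested on the parametrization, so that the notion is the right one over finite fields
too. -/
noncomputable def vanishingForms (d : ℕ) (I : Finset (Fin T.s)) :
    Submodule k (MvPolynomial (Fin (n + 1)) k) :=
  homogeneousSubmodule (Fin (n + 1)) k d ⊓
    ⨅ i ∈ I, LinearMap.ker (aeval (R := k) (T.param i)).toLinearMap

variable {T} {d : ℕ} {I : Finset (Fin T.s)}

lemma mem_subcurve : p ∈ T.subcurve I ↔ ∃ i ∈ I, p ∈ T.comp i := by
  simp [subcurve]

lemma mem_vanishingForms {F : MvPolynomial (Fin (n + 1)) k} :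
    F ∈ T.vanishingForms d I ↔ F.IsHomogeneous d ∧ ∀ i ∈ I, aeval (T.param i) F = 0 := by
  simp [vanishingForms]

lemma map_aeval_param_homogeneousSubmodule_le (d : ℕ) (i : Fin T.s) :
    (homogeneousSubmodule (Fin (n + 1)) k d).map (aeval (R := k) (T.param i)).toLinearMap ≤
      homogeneousSubmodule (Fin 2) k (T.deg i * d) := by
  rintro _ ⟨F, hF, rfl⟩
  exact hF.aeval _ (T.isHomogeneous_param i)

lemma eval_rep_eq_zero_of_mem_vanishingForms {F : MvPolynomial (Fin (n + 1)) k}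
    (hF : F ∈ T.vanishingForms d I) (hp : p ∈ T.subcurve I) : eval p.rep F = 0 := by
  obtain ⟨hhom, hvan⟩ := mem_vanishingForms.1 hF
  obtain ⟨i, hi, hpi⟩ := mem_subcurve.1 hp
  obtain ⟨q, -, c, -, hc⟩ := exists_eval_rep_eq hpi
  rw [hc hhom, hvan i hi, map_zero, mul_zero]

lemma finrank_vanishingForms_le_insert {b : Fin T.s} (hp : p ∈ T.subcurve I) (hpb : p ∈ T.comp b) :
    Module.finrank k (T.vanishingForms d I) ≤
      Module.finrank k (T.vanishingForms d (insert b I)) + T.deg b * d := by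
  obtain ⟨q, hq, c, hc0, hc⟩ := exists_eval_rep_eq hpb
  set f := (aeval (R := k) (T.param b)).toLinearMap
  have hmap : (T.vanishingForms d I).map f ≤ homogeneousSubmodule (Fin 2) k (T.deg b * d) ⊓
      LinearMap.ker (aeval (R := k) q).toLinearMap := by
    rintro _ ⟨F, hF, rfl⟩
    refine ⟨map_aeval_param_homogeneousSubmodule_le d b ⟨F, hF.1, rfl⟩, ?_⟩
    have hev := eval_rep_eq_zero_of_mem_vanishingForms hF hp
    rw [hc hF.1] at hev
    exact (mul_eq_zero.1 hev).resolve_left (pow_ne_zero d hc0)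
  have hinsert : T.vanishingForms d (insert b I) = T.vanishingForms d I ⊓ LinearMap.ker f := by
    rw [vanishingForms, vanishingForms, Finset.iInf_insert, inf_comm (LinearMap.ker _), ← inf_assoc]
  have : FiniteDimensional k (T.vanishingForms d I) := Submodule.finiteDimensional_of_le inf_le_left
  have hrank := finrank_le_finrank_inf_ker_add_finrank f hmap
  have hlt := finrank_homogeneousSubmodule_inf_ker_aeval_lt (T.deg b * d) hq
  rw [finrank_homogeneousSubmodule_fin_two] at hlt
  rw [hinsert]
  omega

lemma choose_le_finrank_vanishingForms_add
    (hI : (T.componentGraph.induce (I : Set (Fin T.s))).Connected) (d : ℕ) :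
    (n + d).choose n ≤ Module.finrank k (T.vanishingForms d I) + ((∑ i ∈ I, T.deg i) * d + 1) := by
  refine connected_induce_induction hI (fun i => ?_) fun J a ha b hb hab ih => ?_
  · have hrank := finrank_le_finrank_inf_ker_add_finrank _
      (map_aeval_param_homogeneousSubmodule_le (T := T) d i)
    rw [finrank_homogeneousSubmodule_fin, finrank_homogeneousSubmodule_fin_two] at hrank
    rwa [vanishingForms, Finset.iInf_singleton, Finset.sum_singleton]
  · obtain ⟨-, p, hpa, hpb⟩ := hab
    have hinsert := finrank_vanishingForms_le_insert (d := d) (mem_subcurve.2 ⟨a, ha, hpa⟩) hpb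
    rw [Finset.sum_insert hb, add_mul]
    omega

lemma two_mul_card_le_of_subset_subcurve
    (hI : (T.componentGraph.induce (I : Set (Fin T.s))).Connected) {A : Finset (ProjSpace k n)}
    (hA : ↑A ⊆ T.subcurve I) :
    (2 * A.card : ℤ) ≤ ((∑ i ∈ I, T.deg i) * d + 1 : ℕ) + h1 k n d A := by
  refine two_mul_card_le_add_h1 inf_le_left (choose_le_finrank_vanishingForms_add hI d)
    fun p hp => ?_
  obtain ⟨i, hi, hpi⟩ := mem_subcurve.1 (hA hp)
  obtain ⟨w, hli, hw⟩ := exists_linearIndependent_differentialAt_rep_eq_zero hpi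
  refine ⟨w, hli, fun F hF => ⟨eval_rep_eq_zero_of_mem_vanishingForms hF (hA hp), ?_⟩⟩
  exact hw hF.1 ((mem_vanishingForms.1 hF).2 i hi)

lemma rep_mem_range_emb (hp : p ∈ T.comp i) : p.rep ∈ LinearMap.range (T.emb i) := by
  obtain ⟨q, -, c, -, hc⟩ := exists_rep_eq_smul_eval_param hp
  rw [hc, eval_param, ← map_smul]
  exact LinearMap.mem_range_self _ _

lemma rep_mem_linearSpan (hp : p ∈ T.subcurve I) : p.rep ∈ T.linearSpan I := by
  obtain ⟨i, hi, hpi⟩ := mem_subcurve.1 hp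
  exact (le_iSup₂ (f := fun i _ => LinearMap.range (T.emb i)) i hi) (rep_mem_range_emb hpi)

lemma finrank_range_emb (i : Fin T.s) :
    Module.finrank k (LinearMap.range (T.emb i)) = T.deg i + 1 := by
  rw [LinearMap.finrank_range_of_inj (T.emb_inj i), Module.finrank_fin_fun]

lemma finrank_linearSpan_insert_le {b : Fin T.s} (hp : p ∈ T.subcurve I) (hpb : p ∈ T.comp b) :
    Module.finrank k (T.linearSpan (insert b I)) ≤
      Module.finrank k (T.linearSpan I) + T.deg b := by
  have hsup : T.linearSpan (insert b I) = LinearMap.range (T.emb b) ⊔ T.linearSpan I := by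
    rw [linearSpan, Finset.iSup_insert, linearSpan]
  have hrank := Submodule.finrank_sup_add_finrank_inf_eq (LinearMap.range (T.emb b))
    (T.linearSpan I)
  have hpos : 0 < Module.finrank k ↥(LinearMap.range (T.emb b) ⊓ T.linearSpan I) :=
    Submodule.one_le_finrank_iff.2 <| Submodule.ne_bot_iff _ |>.2
      ⟨p.rep, ⟨rep_mem_range_emb hpb, rep_mem_linearSpan hp⟩, p.rep_nonzero⟩
  rw [← hsup, finrank_range_emb] at hrank
  omega

lemma finrank_linearSpan_le
    (hI : (T.componentGraph.induce (I : Set (Fin T.s))).Connected) :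
    Module.finrank k (T.linearSpan I) ≤ ∑ i ∈ I, T.deg i + 1 := by
  refine connected_induce_induction hI (fun i => ?_) fun J a ha b hb hab ih => ?_
  · rw [linearSpan, Finset.iSup_singleton, finrank_range_emb, Finset.sum_singleton]
  · obtain ⟨-, p, hpa, hpb⟩ := hab
    have hinsert := finrank_linearSpan_insert_le (mem_subcurve.2 ⟨a, ha, hpa⟩) hpb
    rw [Finset.sum_insert hb]
    omega

lemma le_sum_deg_of_spans_of_subset_subcurve
    (hI : (T.componentGraph.induce (I : Set (Fin T.s))).Connected) {S : Finset (ProjSpace k n)}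
    (hspan : Spans k n S) (hS : ↑S ⊆ T.subcurve I) : n ≤ ∑ i ∈ I, T.deg i := by
  have htop : T.linearSpan I = ⊤ := by
    rw [eq_top_iff, ← hspan, Submodule.span_le]
    rintro _ ⟨p, hp, rfl⟩
    exact rep_mem_linearSpan (hS hp)
  have hrank := finrank_linearSpan_le hI
  rw [htop, finrank_top, Module.finrank_fin_fun] at hrank
  omega

variable {S : Finset (ProjSpace k n)}

open Classical in
lemma two_mul_card_filter_subcurve_le {x : ℕ} (hmem : S ∈ minTerracini k n d x)
    (hI : (T.componentGraph.induce (I : Set (Fin T.s))).Connected)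
    (hdeg : ∑ i ∈ I, T.deg i < n) :
    2 * (S.filter (· ∈ T.subcurve I)).card ≤ (∑ i ∈ I, T.deg i) * d + 1 := by
  obtain ⟨⟨-, hspan, -⟩, hmin⟩ := hmem
  have hproper : S.filter (· ∈ T.subcurve I) ⊂ S := Finset.filter_ssubset.2 <| by
    by_contra! hS
    exact hdeg.not_ge (le_sum_deg_of_spans_of_subset_subcurve hI hspan hS)
  have hbound := two_mul_card_le_of_subset_subcurve (d := d) hI
    (A := S.filter (· ∈ T.subcurve I)) fun p hp => (Finset.mem_filter.1 hp).2
  rw [hmin _ hproper, add_zero] at hbound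
  exact_mod_cast hbound

lemma mem_subcurve_or_mem_subcurve_compl (hp : p ∈ T.curve) (I : Finset (Fin T.s)) :
    p ∈ T.subcurve I ∨ p ∈ T.subcurve Iᶜ := by
  obtain ⟨i, hi⟩ := Set.mem_iUnion.1 hp
  by_cases hiI : i ∈ I
  · exact .inl (mem_subcurve.2 ⟨i, hiI, hi⟩)
  · exact .inr (mem_subcurve.2 ⟨i, Finset.mem_compl.2 hiI, hi⟩)

open Classical in
lemma two_mul_card_filter_subcurve_eq_and_disjoint (hS : ↑S ⊆ T.curve)
    (hmem : S ∈ minTerracini k n d (1 + (n * d + 1) / 2))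
    (hI : (T.componentGraph.induce (I : Set (Fin T.s))).Connected)
    (hIc : (T.componentGraph.induce (↑Iᶜ : Set (Fin T.s))).Connected) :
    2 * (S.filter (· ∈ T.subcurve I)).card = (∑ i ∈ I, T.deg i) * d + 1 ∧
      Disjoint (S.filter (· ∈ T.subcurve I)) (S.filter (· ∈ T.subcurve Iᶜ)) := by
  have hsum : ∑ i ∈ I, T.deg i + ∑ i ∈ Iᶜ, T.deg i = n := by
    rw [Finset.sum_add_sum_compl, T.sum_deg]
  have hpos (J : Finset (Fin T.s)) (hJ : (T.componentGraph.induce (J : Set (Fin T.s))).Connected) :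
      0 < ∑ i ∈ J, T.deg i :=
    Finset.sum_pos (fun i _ => T.deg_pos i) (Set.nonempty_coe_sort.1 hJ.nonempty)
  have hposI := hpos I hI
  have hposIc := hpos Iᶜ hIc
  have hleI := two_mul_card_filter_subcurve_le hmem hI (by omega)
  have hleIc := two_mul_card_filter_subcurve_le hmem hIc (by omega)
  have hcover : S.filter (· ∈ T.subcurve I) ∪ S.filter (· ∈ T.subcurve Iᶜ) = S := by
    rw [← Finset.filter_or, Finset.filter_eq_self]
    exact fun p hp => mem_subcurve_or_mem_subcurve_compl (hS hp) I
  have hcard := Finset.card_union_add_card_inter (S.filter (· ∈ T.subcurve I))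
    (S.filter (· ∈ T.subcurve Iᶜ))
  rw [hcover, hmem.1.1] at hcard
  have hnd : n * d = (∑ i ∈ I, T.deg i) * d + (∑ i ∈ Iᶜ, T.deg i) * d := by
    rw [← add_mul, hsum]
  refine ⟨by omega, ?_⟩
  rw [Finset.disjoint_iff_inter_eq_empty, ← Finset.card_eq_zero]
  omega

lemma even_and_odd_of_split (hS : ↑S ⊆ T.curve)
    (hmem : S ∈ minTerracini k n d (1 + (n * d + 1) / 2))
    (hI : (T.componentGraph.induce (I : Set (Fin T.s))).Connected)
    (hIc : (T.componentGraph.induce (↑Iᶜ : Set (Fin T.s))).Connected) : Even n ∧ Odd d := by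
  obtain ⟨hoddI, hd⟩ := odd_of_two_mul_eq_mul_add_one
    (two_mul_card_filter_subcurve_eq_and_disjoint hS hmem hI hIc).1
  obtain ⟨hoddIc, -⟩ := odd_of_two_mul_eq_mul_add_one
    (two_mul_card_filter_subcurve_eq_and_disjoint hS hmem hIc (by rwa [compl_compl])).1
  refine ⟨?_, hd⟩
  rw [← T.sum_deg, ← Finset.sum_add_sum_compl I]
  exact hoddI.add_odd hoddIc

instance : Nontrivial (Fin T.s) := Fin.nontrivial_iff_two_le.2 T.two_le_s

lemma connected_componentGraph (hT : T.IsGood) : T.componentGraph.Connected := by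
  refine connected_of_forall_exists_adj fun I hne hI => ?_
  lift I to Finset (Fin T.s) using I.toFinite
  obtain ⟨i, hi, j, hj, hij⟩ := hT.2.1 I (by simpa using hne) (by simpa using hI)
  exact ⟨i, hi, j, hj, ne_of_mem_of_not_mem hi hj, hij⟩

lemma exists_connected_split (hT : T.IsGood) {i j : Fin T.s} (hij : i ≠ j) :
    ∃ I : Finset (Fin T.s), i ∈ I ∧ j ∉ I ∧
      (T.componentGraph.induce (I : Set (Fin T.s))).Connected ∧
      (T.componentGraph.induce (↑Iᶜ : Set (Fin T.s))).Connected := by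
  obtain ⟨I, hi, hj, hI, hIc⟩ := exists_connected_induce_and_compl (connected_componentGraph hT) hij
  lift I to Finset (Fin T.s) using I.toFinite
  exact ⟨I, hi, hj, hI, by rwa [Finset.coe_compl]⟩

lemma isClique_neighborSet_of_final (hi : T.Final i) :
    T.componentGraph.IsClique (T.componentGraph.neighborSet i) := by
  obtain ⟨p, hp⟩ := Set.ncard_eq_one.1 hi
  have hmem (a : Fin T.s) (ha : T.componentGraph.Adj i a) : p ∈ T.comp a := by
    obtain ⟨hia, q, hqi, hqa⟩ := ha
    have hqp : q ∈ T.comp i ∩ T.sing := ⟨hqi, i, a, hia, hqi, hqa⟩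
    rw [hp, Set.mem_singleton_iff] at hqp
    exact hqp ▸ hqa
  exact fun a ha b hb hab => ⟨hab, p, hmem a ha, hmem b hb⟩

lemma connected_induce_compl_singleton_of_final (hT : T.IsGood) (hi : T.Final i) :
    (T.componentGraph.induce (({i}ᶜ : Finset (Fin T.s)) : Set (Fin T.s))).Connected := by
  rw [Finset.coe_compl, Finset.coe_singleton]
  exact connected_induce_compl_singleton_of_isClique_neighborSet (connected_componentGraph hT)
    (isClique_neighborSet_of_final hi)

lemma subset_reg_of_mem_minTerracini (hT : T.IsGood) (hS : ↑S ⊆ T.curve)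
    (hmem : S ∈ minTerracini k n d (1 + (n * d + 1) / 2)) : ↑S ⊆ T.reg := by
  classical
  refine fun p hp => ⟨hS hp, ?_⟩
  rintro ⟨i, j, hij, hpi, hpj⟩
  obtain ⟨I, hi, hj, hI, hIc⟩ := exists_connected_split hT hij
  have hdisj := (two_mul_card_filter_subcurve_eq_and_disjoint hS hmem hI hIc).2
  exact Finset.disjoint_left.1 hdisj
    (Finset.mem_filter.2 ⟨hp, mem_subcurve.2 ⟨i, hi, hpi⟩⟩)
    (Finset.mem_filter.2 ⟨hp, mem_subcurve.2 ⟨j, Finset.mem_compl.2 hj, hpj⟩⟩)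

lemma two_mul_ncard_inter_comp_eq_of_final (hT : T.IsGood) (hS : ↑S ⊆ T.curve)
    (hmem : S ∈ minTerracini k n d (1 + (n * d + 1) / 2)) (hi : T.Final i) :
    2 * (↑S ∩ T.comp i).ncard = T.deg i * d + 1 := by
  classical
  have hinter : ↑S ∩ T.comp i = ↑(S.filter (· ∈ T.subcurve {i})) := by
    ext p
    simp [mem_subcurve]
  have hcard := (two_mul_card_filter_subcurve_eq_and_disjoint hS hmem
    (by rw [Finset.coe_singleton]; exact connected_induce_singleton i)
    (connected_induce_compl_singleton_of_final hT hi)).1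
  rw [Finset.sum_singleton] at hcard
  rw [hinter, Set.ncard_coe_finset, hcard]

end RedRNC

theorem redRNC_minTerracini_structure_general
    (k : Type*) [Field k] (n d : ℕ) (T : RedRNC k n) (hT : T.IsGood)
    (S : Finset (ProjSpace k n)) (hS : ↑S ⊆ T.curve)
    (hmem : S ∈ minTerracini k n d (1 + (n * d + 1) / 2)) :
    (↑S ⊆ T.reg) ∧
    (Even n ∧ Odd d) ∧
    (∀ i, T.Final i →
      Odd (T.deg i) ∧ 2 * ((↑S ∩ T.comp i).ncard) = T.deg i * d + 1) := by
  refine ⟨RedRNC.subset_reg_of_mem_minTerracini hT hS hmem, ?_, fun i hi => ?_⟩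
  · obtain ⟨i, j, hij⟩ := exists_pair_ne (Fin T.s)
    obtain ⟨I, -, -, hI, hIc⟩ := RedRNC.exists_connected_split hT hij
    exact RedRNC.even_and_odd_of_split hS hmem hI hIc
  · have hcard := RedRNC.two_mul_ncard_inter_comp_eq_of_final hT hS hmem hi
    exact ⟨(odd_of_two_mul_eq_mul_add_one hcard).1, hcard⟩

/-- Proposition: for `n ≥ 2`, `d ≥ 5` and `x = 1 + ⌈nd/2⌉`, if a minimally Terracini set
`S ∈ T(n,d;x)'` lies on a reducible rational normal curve `T = T_1 ∪ ⋯ ∪ T_s` (`s ≥ 2`)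
then: (1) `S` avoids the singular points of `T`; (2) `n` is even and `d` is odd;
(3) every final component `T_i` has odd degree `n_i` and `2·#(S ∩ T_i) = n_i·d + 1`. -/
theorem redRNC_minTerracini_structure
    (k : Type*) [Field k] [IsAlgClosed k] [CharZero k]
    (n d : ℕ) (hn : 2 ≤ n) (hd : 5 ≤ d)
    (T : RedRNC k n) (hT : T.IsGood)
    (S : Finset (ProjSpace k n)) (hS : ↑S ⊆ T.curve)
    (hmem : S ∈ minTerracini k n d (1 + (n * d + 1) / 2)) :
    (↑S ⊆ T.reg) ∧
    (Even n ∧ Odd d) ∧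
    (∀ i, T.Final i →
      Odd (T.deg i) ∧ 2 * ((↑S ∩ T.comp i).ncard) = T.deg i * d + 1) :=
  redRNC_minTerracini_structure_general k n d T hT S hS hmem
end

section
/- Let d ≥ 7 be an odd integer and set x := (3d+1)/2. Let C ⊂ P^2 be a smooth plane cubic curve and let S ⊂ C be any set of x points on C. Then S ∈ T(2,d;x)'; in particular T(2,d;(3d+1)/2)' ≠ ∅ for every odd d ≥ 7. -/
open MvPolynomial

/-- The zero locus in `P^n` of a (homogeneous) polynomial `q`. -/
def projZeroLocus (k : Type*) [Field k] (n : ℕ) (q : MvPolynomial (Fin (n+1)) k) :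
    Set (ProjSpace k n) :=
  {p | MvPolynomial.eval (Projectivization.rep p) q = 0}

/-- `q` defines a smooth plane curve of degree `e` in `P^2`: `q` is a nonzero homogeneous
form of degree `e` and at no point of its zero locus do all partial derivatives vanish. -/
def IsSmoothPlaneCurve (k : Type*) [Field k] (e : ℕ) (q : MvPolynomial (Fin 3) k) : Prop :=
  q ≠ 0 ∧ q ∈ MvPolynomial.homogeneousSubmodule (Fin 3) k e ∧
    ∀ v : Fin 3 → k, v ≠ 0 → MvPolynomial.eval v q = 0 →
      ∃ i, MvPolynomial.eval v (MvPolynomial.pderiv i q) ≠ 0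

/-!
Multiples `c * G` of the cubic vanish doubly on `S` as soon as `G` vanishes simply on `S`, so
`h⁰ ≥ C(d-1, 2) - #S`. This is positive, and it exceeds the expected dimension
`C(d+2, 2) - 3 * #S = C(d-1, 2) + 3 * d - 3 * #S` because `2 * #S = 3 * d + 1`.

For minimality it suffices to remove one point from `S`. A linear relation between the conditions
imposed by the remaining double points assigns a tangent vector to each point. Evaluated on
multiples of `c`, it gives a relation between simple points in degree `d - 3` whose coefficients
are the components normal to the cubic; once these vanish, the relation consists of vectors tangent
to the cubic. A Cayley–Bacharach argument shows that either kind of relation is supported on at most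
three points, and products of linear forms show that so few points satisfy only the trivial
relation. The Bézout bound behind this is a dimension count in a degree where all the conditions
are independent.
-/

namespace Terracini

section Differential

variable {R σ : Type*} [CommRing R] [Fintype σ]

/-- The differential at `v` of a polynomial `F`, as the functional `w ↦ ∑ i, ∂ᵢF(v) wᵢ`. -/
noncomputable def differential (v : σ → R) :
    MvPolynomial σ R →ₗ[R] Module.Dual R (σ → R) :=
  ∑ i, ((aeval v).toLinearMap ∘ₗ (pderiv i).toLinearMap).smulRight (LinearMap.proj i)

lemma differential_apply (v w : σ → R) (F : MvPolynomial σ R) :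
    differential v F w = ∑ i, eval v (pderiv i F) * w i := by
  simp [differential, LinearMap.sum_apply, aeval_eq_eval]

lemma differential_mul (v : σ → R) (F G : MvPolynomial σ R) :
    differential v (F * G) = eval v F • differential v G + eval v G • differential v F := by
  refine LinearMap.ext fun w ↦ ?_
  simp only [differential_apply, Derivation.leibniz, smul_eq_mul, map_add, map_mul,
    LinearMap.add_apply, LinearMap.smul_apply, Finset.mul_sum, ← Finset.sum_add_distrib]
  exact Finset.sum_congr rfl fun i _ ↦ by ring

lemma differential_mul_apply (v w : σ → R) (F G : MvPolynomial σ R) :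
    differential v (F * G) w = eval v F * differential v G w + eval v G * differential v F w := by
  rw [differential_mul]
  rfl

lemma differential_apply_self {F : MvPolynomial σ R} {d : ℕ} (hF : F.IsHomogeneous d)
    (v : σ → R) : differential v F v = d * eval v F := by
  have euler := congrArg (eval v) hF.sum_X_mul_pderiv
  simpa [differential_apply, mul_comm] using euler

lemma eval_eq_zero_of_differential_apply_self_eq_zero [NoZeroDivisors R] [CharZero R] {d : ℕ}
    (hd : d ≠ 0) {F : MvPolynomial σ R} (hF : F.IsHomogeneous d) {v : σ → R}
    (hv : differential v F v = 0) : eval v F = 0 := by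
  rw [differential_apply_self hF] at hv
  exact (mul_eq_zero.1 hv).resolve_left (Nat.cast_ne_zero.2 hd)

lemma differential_single [DecidableEq σ] (v : σ → R) (F : MvPolynomial σ R) (i : σ) :
    differential v F (Pi.single i 1) = eval v (pderiv i F) := by
  simp [differential_apply, Pi.single_apply]

/-- The linear form `∑ i, f(eᵢ) Xᵢ` given by the functional `f`. -/
noncomputable def linearForm [DecidableEq σ] (f : Module.Dual R (σ → R)) : MvPolynomial σ R :=
  ∑ i, C (f (Pi.single i 1)) * X i

variable [DecidableEq σ]

lemma isHomogeneous_linearForm (f : Module.Dual R (σ → R)) : (linearForm f).IsHomogeneous 1 :=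
  IsHomogeneous.sum _ _ _ fun i _ ↦ isHomogeneous_C_mul_X _ i

@[simp]
lemma eval_linearForm (f : Module.Dual R (σ → R)) (v : σ → R) :
    eval v (linearForm f) = f v := by
  conv_rhs => rw [pi_eq_sum_univ' v]
  simp [linearForm, mul_comm]

@[simp]
lemma differential_linearForm (f : Module.Dual R (σ → R)) (v : σ → R) :
    differential v (linearForm f) = f := by
  refine LinearMap.pi_ext' fun i ↦ LinearMap.ext_ring ?_
  simp [differential_single, linearForm, pderiv_X, Pi.single_apply, apply_ite (eval v)]

lemma linearForm_differential_zero {F : MvPolynomial σ R} (hF : F.IsHomogeneous 1) :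
    linearForm (differential 0 F) = F := by
  have pderiv_eq_C (i : σ) : pderiv i F = C (eval 0 (pderiv i F)) := by
    have := (totalDegree_zero_iff_isHomogeneous σ |>.2 (hF.pderiv (i := i)))
    rw [totalDegree_eq_zero_iff_eq_C] at this
    rw [this, eval_C]
  calc linearForm (differential 0 F) = ∑ i, X i * pderiv i F :=
        Finset.sum_congr rfl fun i _ ↦ by rw [differential_single, mul_comm, ← pderiv_eq_C]
    _ = F := by rw [hF.sum_X_mul_pderiv, one_smul]

end Differential

section Forms

variable {R σ : Type*} [CommRing R]

lemma exists_isHomogeneous_eq_mul {A F : MvPolynomial σ R} {m j : ℕ} (hA : A.IsHomogeneous m)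
    (hF : F.IsHomogeneous (m + j)) (hAF : A ∣ F) :
    ∃ B : MvPolynomial σ R, B.IsHomogeneous j ∧ F = A * B := by
  obtain ⟨B, rfl⟩ := hAF
  let _ : GradedAlgebra (homogeneousSubmodule σ R) := MvPolynomial.gradedAlgebra
  have decompose_mul := DirectSum.coe_decompose_mul_add_of_left_mem
    (homogeneousSubmodule σ R) (b := B) (j := j) hA
  rw [DirectSum.decompose_of_mem_same _ hF] at decompose_mul
  exact ⟨_, (DirectSum.decompose (homogeneousSubmodule σ R) B j).2, decompose_mul⟩

variable (k : Type*) [Field k] (n d : ℕ)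

instance : FiniteDimensional k (homogeneousSubmodule (Fin (n + 1)) k d) :=
  Module.Finite.iff_fg.2 (homogeneousSubmodule_fg _ _ _)

lemma finrank_homogeneousSubmodule :
    Module.finrank k (homogeneousSubmodule (Fin (n + 1)) k d) = (n + d).choose n := by
  have degree_eq : {f : Fin (n + 1) →₀ ℕ | f.degree = d} =
      (Finset.univ.finsuppAntidiag d : Finset (Fin (n + 1) →₀ ℕ)) := by
    ext f
    simp [Finset.mem_finsuppAntidiag, Finsupp.degree_eq_sum]
  rw [homogeneousSubmodule_eq_finsupp_supported, degree_eq,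
    (AddMonoidAlgebra.supportedEquivFinsupp (R := k) (S := k) _).finrank_eq,
    Module.finrank_finsupp_self, ← Nat.card_eq_fintype_card, Nat.card_coe_set_eq,
    Set.ncard_coe_finset, Finset.card_finsuppAntidiag_nat_eq_choose, Finset.card_univ,
    Fintype.card_fin, Nat.add_right_comm, Nat.add_sub_cancel,
    Nat.choose_symm_add]

end Forms

section TangentForms

variable {k : Type*} [Field k] {n : ℕ}

/-- The degree `d` forms whose differential at each point `s` of `S` vanishes on `T s`.
For `d ≠ 0` in characteristic zero Euler's identity makes this vanishing at `s` when `T s` is the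
line `s`, and vanishing to order two when `T s` is the whole space. -/
def tangentForms (d : ℕ) (S : Finset (ProjSpace k n))
    (T : ProjSpace k n → Submodule k (Fin (n + 1) → k)) :
    Submodule k (MvPolynomial (Fin (n + 1)) k) where
  carrier := {F | F.IsHomogeneous d ∧ ∀ s ∈ S, ∀ w ∈ T s, differential s.rep F w = 0}
  add_mem' hF hG := ⟨hF.1.add hG.1, fun s hs w hw ↦ by
    rw [map_add, LinearMap.add_apply, hF.2 s hs w hw, hG.2 s hs w hw, add_zero]⟩
  zero_mem' := ⟨isHomogeneous_zero _ _ d, fun s _ w _ ↦ by rw [map_zero, LinearMap.zero_apply]⟩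
  smul_mem' a F hF := ⟨(homogeneousSubmodule _ k d).smul_mem a hF.1, fun s hs w hw ↦ by
    rw [map_smul, LinearMap.smul_apply, hF.2 s hs w hw, smul_zero]⟩

/-- The tangent vectors `w s` at the points `s` of `S` are a linear relation between the conditions
they impose on degree `d` forms. -/
def IsRelation (d : ℕ) (S : Finset (ProjSpace k n)) (w : ProjSpace k n → Fin (n + 1) → k) : Prop :=
  ∀ F : MvPolynomial (Fin (n + 1)) k, F.IsHomogeneous d →
    ∑ s ∈ S, differential s.rep F (w s) = 0

variable {d : ℕ} {S : Finset (ProjSpace k n)}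
  {T : ProjSpace k n → Submodule k (Fin (n + 1) → k)}

instance : FiniteDimensional k (tangentForms d S T) :=
  Submodule.finiteDimensional_of_le (S₂ := homogeneousSubmodule _ k d) fun _ hF ↦ hF.1

lemma mem_tangentForms_span_rep {F : MvPolynomial (Fin (n + 1)) k} (hF : F.IsHomogeneous d)
    (hS : ∀ s ∈ S, eval s.rep F = 0) : F ∈ tangentForms d S fun s ↦ k ∙ s.rep := by
  refine ⟨hF, fun s hs w hw ↦ ?_⟩
  obtain ⟨a, rfl⟩ := Submodule.mem_span_singleton.1 hw
  rw [map_smul, differential_apply_self hF, hS s hs, mul_zero, smul_zero]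

lemma eval_eq_zero_of_mem_tangentForms [CharZero k] (hd : d ≠ 0)
    {F : MvPolynomial (Fin (n + 1)) k} (hF : F ∈ tangentForms d S T) {s : ProjSpace k n}
    (hs : s ∈ S) (hT : s.rep ∈ T s) : eval s.rep F = 0 :=
  eval_eq_zero_of_differential_apply_self_eq_zero hd hF.1 (hF.2 s hs _ hT)

lemma mul_mem_tangentForms [CharZero k] (hd : d ≠ 0) (hT : ∀ s ∈ S, s.rep ∈ T s) {j : ℕ}
    {F G : MvPolynomial (Fin (n + 1)) k} (hF : F ∈ tangentForms d S T) (hG : G.IsHomogeneous j) :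
    F * G ∈ tangentForms (d + j) S T :=
  ⟨hF.1.mul hG, fun s hs w hw ↦ by
    rw [differential_mul_apply, eval_eq_zero_of_mem_tangentForms hd hF hs (hT s hs),
      hF.2 s hs w hw, zero_mul, mul_zero, add_zero]⟩

variable (d S T) in
/-- The conditions that tangent vectors in `T s`, `s ∈ S`, impose on degree `d` forms: the kernel
consists of relations, and `tangentForms d S T` is the space of forms killed by the range. -/
noncomputable def conditionMap :
    (∀ s : S, T s) →ₗ[k] Module.Dual k (homogeneousSubmodule (Fin (n + 1)) k d) :=
  ∑ s : S, ((differential (s : ProjSpace k n).rep).domRestrict _).flip ∘ₗ (T s).subtype ∘ₗ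
    LinearMap.proj s

lemma conditionMap_apply (w : ∀ s : S, T s) (F : homogeneousSubmodule (Fin (n + 1)) k d) :
    conditionMap d S T w F = ∑ s : S, differential s.1.rep F.1 (w s) := by
  simp [conditionMap, LinearMap.sum_apply]

lemma map_dualCoannihilator_range_conditionMap :
    (LinearMap.range (conditionMap d S T)).dualCoannihilator.map
      (homogeneousSubmodule (Fin (n + 1)) k d).subtype = tangentForms d S T := by
  classical
  ext F
  constructor
  · rintro ⟨F, hF, rfl⟩
    refine ⟨F.2, fun s hs w hw ↦ ?_⟩
    have := (Submodule.mem_dualCoannihilator _).1 hF _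
      ⟨Pi.single ⟨s, hs⟩ ⟨w, hw⟩, rfl⟩
    rw [conditionMap_apply, Finset.sum_eq_single ⟨s, hs⟩] at this
    · simpa using this
    · intro t _ hts
      simp [Pi.single_eq_of_ne hts]
    · simp
  · rintro hF
    refine ⟨⟨F, hF.1⟩, (Submodule.mem_dualCoannihilator _).2 ?_, rfl⟩
    rintro _ ⟨w, rfl⟩
    rw [conditionMap_apply]
    exact Finset.sum_eq_zero fun s _ ↦ hF.2 s s.2 _ (w s).2

lemma finrank_tangentForms_add_finrank_range :
    Module.finrank k (tangentForms d S T) +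
      Module.finrank k (LinearMap.range (conditionMap d S T)) = (n + d).choose n := by
  rw [← map_dualCoannihilator_range_conditionMap, Submodule.finrank_map_subtype_eq, add_comm,
    Subspace.finrank_add_finrank_dualCoannihilator_eq, finrank_homogeneousSubmodule]

lemma finrank_pi_coe_sort :
    Module.finrank k (∀ s : S, T s) = ∑ s ∈ S, Module.finrank k (T s) := by
  rw [Module.finrank_pi_fintype, Finset.sum_coe_sort S fun s ↦ Module.finrank k (T s)]

lemma choose_le_finrank_tangentForms_add_sum :
    (n + d).choose n ≤ Module.finrank k (tangentForms d S T) + ∑ s ∈ S, Module.finrank k (T s) := by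
  rw [← finrank_tangentForms_add_finrank_range (S := S) (T := T), ← finrank_pi_coe_sort]
  gcongr
  exact LinearMap.finrank_range_le _

end TangentForms

section IndependentConditions

variable {k : Type*} [Field k] {n d : ℕ} {S : Finset (ProjSpace k n)}
  {T : ProjSpace k n → Submodule k (Fin (n + 1) → k)}

/-- The tangent vectors in `T s`, `s ∈ S`, impose independent conditions on degree `d` forms. -/
def IndependentConditions (d : ℕ) (S : Finset (ProjSpace k n))
    (T : ProjSpace k n → Submodule k (Fin (n + 1) → k)) : Prop :=
  ∀ w : ProjSpace k n → Fin (n + 1) → k,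
    (∀ s ∈ S, w s ∈ T s) → IsRelation d S w → ∀ s ∈ S, w s = 0

lemma finrank_tangentForms_add_sum (hT : IndependentConditions d S T) :
    Module.finrank k (tangentForms d S T) + ∑ s ∈ S, Module.finrank k (T s) =
      (n + d).choose n := by
  classical
  have injective : Function.Injective (conditionMap d S T) := by
    refine (injective_iff_map_eq_zero _).2 fun w hw ↦ ?_
    let w' (s : ProjSpace k n) : Fin (n + 1) → k := if hs : s ∈ S then w ⟨s, hs⟩ else 0
    have w'_coe (s : S) : w' s = w s := dif_pos s.2
    have w'_eq_zero := hT w' (fun s hs ↦ by rw [w'_coe ⟨s, hs⟩]; exact (w ⟨s, hs⟩).2)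
      fun F hF ↦ by
        rw [← Finset.sum_coe_sort S fun s ↦ differential s.rep F (w' s)]
        simpa [w'_coe, conditionMap_apply] using LinearMap.congr_fun hw ⟨F, hF⟩
    exact funext fun s ↦ Subtype.ext ((w'_coe s).symm.trans (w'_eq_zero s s.2))
  rw [← finrank_tangentForms_add_finrank_range (S := S) (T := T), ← finrank_pi_coe_sort,
    LinearMap.finrank_range_of_inj injective]

lemma IsRelation.extend_zero {S' : Finset (ProjSpace k n)} (hS : S' ⊆ S)
    {w : ProjSpace k n → Fin (n + 1) → k} (hw : IsRelation d S' w) :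
    IsRelation d S (Set.indicator S' w) := by
  intro F hF
  rw [← hw F hF, ← Finset.sum_subset hS]
  · exact Finset.sum_congr rfl fun s hs ↦ by rw [Set.indicator_of_mem (Finset.mem_coe.2 hs)]
  · intro s _ hs
    rw [Set.indicator_of_notMem (by simpa using hs), map_zero]

lemma IndependentConditions.subset {S' : Finset (ProjSpace k n)} (hS : S' ⊆ S)
    (hT : IndependentConditions d S T) : IndependentConditions d S' T := by
  intro w hwT hw s hs
  have extend_eq_zero := hT _ (fun s _ ↦ ?_) (hw.extend_zero hS) s (hS hs)
  · rwa [Set.indicator_of_mem (Finset.mem_coe.2 hs)] at extend_eq_zero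
  · by_cases hs' : s ∈ (S' : Set (ProjSpace k n))
    · rw [Set.indicator_of_mem hs']
      exact hwT s hs'
    · rw [Set.indicator_of_notMem hs']
      exact zero_mem _

lemma mem_doubleVanishing_iff [CharZero k] (hd : d ≠ 0) {F : MvPolynomial (Fin (n + 1)) k}
    (hF : F.IsHomogeneous d) (v : Fin (n + 1) → k) :
    F ∈ doubleVanishing k v ↔ differential v F = 0 := by
  simp only [doubleVanishing, evalLM, Submodule.mem_inf, LinearMap.mem_ker, Submodule.mem_iInf,
    LinearMap.comp_apply, AlgHom.toLinearMap_apply, aeval_eq_eval, Derivation.coeFn_coe]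
  constructor
  · rintro ⟨-, hF'⟩
    refine LinearMap.ext fun w ↦ ?_
    simp [differential_apply, hF']
  · intro hF'
    refine ⟨eval_eq_zero_of_differential_apply_self_eq_zero hd hF ?_, fun i ↦ ?_⟩
    · rw [hF', LinearMap.zero_apply]
    · rw [← differential_single, hF', LinearMap.zero_apply]

lemma h0_eq_finrank_tangentForms [CharZero k] (hd : d ≠ 0) :
    h0 k n d S = Module.finrank k (tangentForms d S fun _ ↦ ⊤) := by
  suffices homogeneousSubmodule (Fin (n + 1)) k d ⊓ ⨅ p ∈ S, doubleVanishing k p.rep =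
      tangentForms d S fun _ ↦ ⊤ by rw [h0, this]
  ext F
  simp only [Submodule.mem_inf, Submodule.mem_iInf, mem_homogeneousSubmodule]
  refine and_congr_right fun hF ↦ forall₂_congr fun s _ ↦ ?_
  simp [mem_doubleVanishing_iff hd hF, LinearMap.ext_iff]

lemma h1_eq_zero_of_independentConditions [CharZero k] (hd : d ≠ 0)
    (hS : IndependentConditions d S fun _ ↦ ⊤) : h1 k n d S = 0 := by
  have count := finrank_tangentForms_add_sum hS
  simp only [finrank_top, Module.finrank_fin_fun, Finset.sum_const, smul_eq_mul] at count
  rw [h1, h0_eq_finrank_tangentForms hd, ← count]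
  push_cast
  ring

end IndependentConditions

section Separation

variable {k : Type*} [Field k] {n d : ℕ} {S : Finset (ProjSpace k n)}

lemma rep_notMem_span_rep {p q : ProjSpace k n} (hpq : p ≠ q) : p.rep ∉ k ∙ q.rep := by
  rw [Submodule.mem_span_singleton]
  rintro ⟨a, ha⟩
  refine hpq (?_ : p = q)
  rw [← p.mk_rep, ← q.mk_rep, Projectivization.mk_eq_mk_iff']
  exact ⟨a, ha⟩

lemma exists_isHomogeneous_eval_ne_zero {p : ProjSpace k n} (hp : p ∉ S) {m : ℕ}
    (hm : S.card ≤ m) :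
    ∃ K : MvPolynomial (Fin (n + 1)) k, K.IsHomogeneous m ∧ eval p.rep K ≠ 0 ∧
      ∀ q ∈ S, eval q.rep K = 0 := by
  classical
  induction S using Finset.induction_on generalizing m with
  | empty =>
    obtain ⟨i, hi⟩ := Function.ne_iff.1 p.rep_nonzero
    exact ⟨X i ^ m, isHomogeneous_X_pow i m, by simpa using pow_ne_zero m hi, by simp⟩
  | insert q S hq ih =>
    rw [Finset.card_insert_of_notMem hq] at hm
    rw [Finset.mem_insert, not_or] at hp
    obtain ⟨K, hK, hKp, hKS⟩ := ih hp.2 (Nat.le_sub_one_of_lt hm)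
    obtain ⟨f, hfp, hfq⟩ := Submodule.exists_le_ker_of_notMem (rep_notMem_span_rep hp.1)
    refine ⟨K * linearForm f, ?_, by simpa using ⟨hKp, hfp⟩, ?_⟩
    · simpa [Nat.sub_add_cancel (Nat.one_le_of_lt hm)] using hK.mul (isHomogeneous_linearForm f)
    · have hfq' : f q.rep = 0 := hfq (Submodule.mem_span_singleton_self _)
      simp +contextual [hfq', hKS]

lemma exists_isHomogeneous_eval_eq_zero_differential_eq_zero {p : ProjSpace k n} (hp : p ∉ S)
    {m : ℕ} (hm : 2 * S.card ≤ m) :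
    ∃ K : MvPolynomial (Fin (n + 1)) k, K.IsHomogeneous m ∧ eval p.rep K ≠ 0 ∧
      ∀ q ∈ S, eval q.rep K = 0 ∧ differential q.rep K = 0 := by
  obtain ⟨K₁, hK₁, hK₁p, hK₁S⟩ := exists_isHomogeneous_eval_ne_zero hp le_rfl
  obtain ⟨K₂, hK₂, hK₂p, hK₂S⟩ :=
    exists_isHomogeneous_eval_ne_zero hp (show S.card ≤ m - S.card by omega)
  refine ⟨K₁ * K₂, ?_, by simpa using ⟨hK₁p, hK₂p⟩, fun q hq ↦ ?_⟩
  · simpa [show S.card + (m - S.card) = m by omega] using hK₁.mul hK₂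
  · simp [differential_mul, hK₁S q hq, hK₂S q hq]

lemma independentConditions_span_rep [CharZero k] (hd : d ≠ 0) (hS : S.card ≤ d + 1) :
    IndependentConditions d S fun s ↦ k ∙ s.rep := by
  classical
  intro w hwT hw p hp
  choose! a ha using fun s hs ↦ Submodule.mem_span_singleton.1 (hwT s hs)
  obtain ⟨K, hK, hKp, hKS⟩ := exists_isHomogeneous_eval_ne_zero (S.notMem_erase p)
    (show (S.erase p).card ≤ d by rw [Finset.card_erase_of_mem hp]; omega)
  have differential_eq (s : ProjSpace k n) (hs : s ∈ S) :
      differential s.rep K (w s) = a s * (d * eval s.rep K) := by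
    rw [← ha s hs, map_smul, differential_apply_self hK, smul_eq_mul]
  have relation := hw K hK
  rw [Finset.sum_eq_single_of_mem p hp fun s hs hsp ↦ by
    rw [differential_eq s hs, hKS s (Finset.mem_erase.2 ⟨hsp, hs⟩), mul_zero, mul_zero],
    differential_eq p hp] at relation
  have : a p = 0 := by simpa [hd, hKp] using relation
  rw [← ha p hp, this, zero_smul]

lemma eq_zero_of_forall_differential_mul_linearForm_eq_zero [CharZero k] {v w : Fin (n + 1) → k}
    {m : ℕ} {K : MvPolynomial (Fin (n + 1)) k} (hK : K.IsHomogeneous m) (hKv : eval v K ≠ 0)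
    (hw : ∀ f, differential v (K * linearForm f) w = 0) : w = 0 := by
  have combination : eval v K • w + differential v K w • v = 0 := by
    refine (Module.forall_dual_apply_eq_zero_iff k _).1 fun f ↦ ?_
    have hf := hw f
    simp only [differential_mul_apply, differential_linearForm, eval_linearForm] at hf
    rw [map_add, map_smul, map_smul, smul_eq_mul, smul_eq_mul, ← hf, mul_comm (f v)]
  -- Apply `dK` to the combination: by Euler's identity it becomes `(m + 1) K(v) dK(w) = 0`.
  have differential_eq_zero : differential v K w = 0 := by
    have applied := congrArg (differential v K) combination
    rw [map_add, map_smul, map_smul, differential_apply_self hK, map_zero, smul_eq_mul,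
      smul_eq_mul] at applied
    have : (m + 1 : k) * (eval v K * differential v K w) = 0 := by linear_combination applied
    simpa [hKv, Nat.cast_add_one_ne_zero] using this
  simpa [differential_eq_zero, hKv] using combination

lemma independentConditions_of_two_mul_card_le [CharZero k] (hS : 2 * S.card ≤ d + 1)
    (T : ProjSpace k n → Submodule k (Fin (n + 1) → k)) : IndependentConditions d S T := by
  classical
  intro w _ hw p hp
  have card_erase := Finset.card_erase_of_mem hp
  have card_pos := Finset.card_pos.2 ⟨p, hp⟩
  obtain ⟨K, hK, hKp, hKS⟩ := exists_isHomogeneous_eval_eq_zero_differential_eq_zero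
    (S.notMem_erase p) (show 2 * (S.erase p).card ≤ d - 1 by omega)
  refine eq_zero_of_forall_differential_mul_linearForm_eq_zero hK hKp fun f ↦ ?_
  have relation := hw (K * linearForm f) (by
    simpa [show d - 1 + 1 = d by omega] using hK.mul (isHomogeneous_linearForm f))
  rwa [Finset.sum_eq_single_of_mem p hp fun s hs hsp ↦ by
    have hKs := hKS s (Finset.mem_erase.2 ⟨hsp, hs⟩)
    rw [differential_mul_apply, hKs.1, hKs.2, LinearMap.zero_apply, zero_mul, mul_zero,
      add_zero]] at relation

end Separation

section Multiples

variable {k : Type*} [Field k] {n : ℕ} {c : MvPolynomial (Fin (n + 1)) k}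

/-- The multiples `c * G` of `c` by forms `G` of degree `j`. -/
noncomputable def multiples (c : MvPolynomial (Fin (n + 1)) k) (j : ℕ) :
    Submodule k (MvPolynomial (Fin (n + 1)) k) :=
  (homogeneousSubmodule (Fin (n + 1)) k j).map (LinearMap.mulLeft k c)

lemma mul_mem_multiples {j : ℕ} {G : MvPolynomial (Fin (n + 1)) k} (hG : G.IsHomogeneous j) :
    c * G ∈ multiples c j :=
  Submodule.mem_map_of_mem (f := LinearMap.mulLeft k c) hG

instance (j : ℕ) : FiniteDimensional k (multiples c j) :=
  inferInstanceAs
    (FiniteDimensional k ((homogeneousSubmodule _ k j).map (LinearMap.mulLeft k c)))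

lemma finrank_multiples (hc : c ≠ 0) (j : ℕ) :
    Module.finrank k (multiples c j) = (n + j).choose n := by
  rw [← finrank_homogeneousSubmodule k]
  exact (Submodule.equivMapOfInjective (LinearMap.mulLeft k c)
    (mul_right_injective₀ hc) _).finrank_eq.symm

lemma multiples_inf_multiples_le (hc : Prime c) {e f j : ℕ} (hce : c.IsHomogeneous e)
    {H : MvPolynomial (Fin (n + 1)) k} (hcH : ¬ c ∣ H) :
    multiples c f ⊓ multiples H (e + j) ≤ multiples (H * c) j := by
  rintro _ ⟨⟨A, -, rfl⟩, B, hB, hAB⟩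
  simp only [LinearMap.mulLeft_apply] at hAB ⊢
  have hcB : c ∣ B := (hc.dvd_or_dvd ⟨A, hAB⟩).resolve_left hcH
  obtain ⟨B', hB', rfl⟩ := exists_isHomogeneous_eq_mul hce hB hcB
  rw [← hAB, ← mul_assoc]
  exact mul_mem_multiples hB'

lemma exists_mem_tangentForms_not_dvd {e j : ℕ} (hc : c ≠ 0) (hce : c.IsHomogeneous e)
    {S : Finset (ProjSpace k n)} {T : ProjSpace k n → Submodule k (Fin (n + 1) → k)}
    (hcount : ∑ s ∈ S, Module.finrank k (T s) + (n + j).choose n < (n + (e + j)).choose n) :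
    ∃ H ∈ tangentForms (e + j) S T, ¬ c ∣ H := by
  by_contra! hdvd
  have le_multiples : tangentForms (e + j) S T ≤ multiples c j := by
    intro F hF
    obtain ⟨G, hG, rfl⟩ := exists_isHomogeneous_eq_mul hce hF.1 (hdvd F hF)
    exact mul_mem_multiples hG
  have finrank_le := Submodule.finrank_mono le_multiples
  rw [finrank_multiples hc] at finrank_le
  have := choose_le_finrank_tangentForms_add_sum (d := e + j) (S := S) (T := T)
  omega

end Multiples

section Bezout

variable {k : Type*} [Field k] [CharZero k] {c : MvPolynomial (Fin 3) k} {e : ℕ}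
  {S : Finset (ProjSpace k 2)} {T : ProjSpace k 2 → Submodule k (Fin 3 → k)}

lemma choose_two_second_difference (j e f : ℕ) :
    (2 + (e + f + j)).choose 2 + (2 + j).choose 2 =
      (2 + (e + j)).choose 2 + (2 + (f + j)).choose 2 + e * f := by
  rw [← Nat.cast_inj (R := ℚ)]
  push_cast [Nat.cast_choose_two]
  ring

lemma choose_two_add_three (j : ℕ) :
    (2 + (3 + j)).choose 2 = (2 + j).choose 2 + 3 * (3 + j) := by
  rw [← Nat.cast_inj (R := ℚ)]
  push_cast [Nat.cast_choose_two]
  ring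

-- Bézout's theorem by counting: in a degree where `S` imposes independent conditions, the
-- multiples of `c` and `H` span a subspace of `tangentForms` of codimension `e * f` in all forms.
theorem sum_finrank_le_mul_of_not_dvd (hc : Prime c) (he : e ≠ 0) {f : ℕ} (hf : f ≠ 0)
    (hT : ∀ s ∈ S, s.rep ∈ T s) (hcT : c ∈ tangentForms e S T) {H : MvPolynomial (Fin 3) k}
    (hHT : H ∈ tangentForms f S T) (hcH : ¬ c ∣ H) :
    ∑ s ∈ S, Module.finrank k (T s) ≤ e * f := by
  set j := 2 * S.card
  have sup_le : multiples c (f + j) ⊔ multiples H (e + j) ≤ tangentForms (e + f + j) S T := by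
    refine sup_le ?_ ?_
    · rintro _ ⟨G, hG, rfl⟩
      exact add_assoc e f j ▸ mul_mem_tangentForms he hT hcT hG
    · rintro _ ⟨G, hG, rfl⟩
      exact add_comm f e ▸ add_assoc f e j ▸ mul_mem_tangentForms hf hT hHT hG
  have finrank_sup_le := Submodule.finrank_mono sup_le
  have finrank_inf_le := Submodule.finrank_mono
    (multiples_inf_multiples_le (f := f + j) (j := j) hc hcT.1 hcH)
  have sup_add_inf := Submodule.finrank_sup_add_finrank_inf_eq
    (multiples c (f + j)) (multiples H (e + j))
  have independent : Module.finrank k (tangentForms (e + f + j) S T) +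
      ∑ s ∈ S, Module.finrank k (T s) = (2 + (e + f + j)).choose 2 := finrank_tangentForms_add_sum
    (independentConditions_of_two_mul_card_le (d := e + f + j) (S := S) (by omega) T)
  have hH : H ≠ 0 := fun h ↦ hcH (h ▸ dvd_zero c)
  rw [finrank_multiples hc.ne_zero, finrank_multiples hH] at sup_add_inf
  rw [finrank_multiples (mul_ne_zero hH hc.ne_zero)] at finrank_inf_le
  have := choose_two_second_difference j e f
  omega

lemma spans_of_degree_lt_card (hc : Prime c) (hce : c.IsHomogeneous e) (he : 2 ≤ e)
    (hS : ∀ s ∈ S, eval s.rep c = 0) (hcard : e < S.card) : Spans k 2 S := by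
  by_contra hspan
  obtain ⟨f, hf, hfS⟩ := Submodule.exists_le_ker_of_lt_top _ (lt_top_iff_ne_top.2 hspan)
  have hfS' (s : ProjSpace k 2) (hs : s ∈ S) : f s.rep = 0 :=
    hfS (Submodule.subset_span (Set.mem_image_of_mem _ hs))
  have hlinear : linearForm f ≠ 0 := by
    intro h
    exact hf (by rw [← differential_linearForm f 0, h, map_zero])
  have not_dvd : ¬ c ∣ linearForm f := by
    rintro ⟨B, hB⟩
    have hB0 : B ≠ 0 := by
      rintro rfl
      exact hlinear (by rw [hB, mul_zero])
    have degree := (isHomogeneous_linearForm f).totalDegree hlinear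
    rw [hB, totalDegree_mul_of_isDomain hc.ne_zero hB0, hce.totalDegree hc.ne_zero] at degree
    omega
  have bezout := sum_finrank_le_mul_of_not_dvd hc (by omega) one_ne_zero
    (fun s _ ↦ Submodule.mem_span_singleton_self s.rep) (mem_tangentForms_span_rep hce hS)
    (mem_tangentForms_span_rep (isHomogeneous_linearForm f) (by simpa using hfS')) not_dvd
  simp only [finrank_span_singleton (Projectivization.rep_nonzero _), Finset.sum_const,
    smul_eq_mul, mul_one] at bezout
  omega

end Bezout

section CayleyBacharach

variable {k : Type*} [Field k]

lemma finrank_inf_ker_add_one {V : Type*} [AddCommGroup V] [Module k V] [FiniteDimensional k V]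
    {U : Submodule k V} {w : V} (hw : w ∈ U) {φ : Module.Dual k V} (hφ : φ w ≠ 0) :
    Module.finrank k ↥(U ⊓ LinearMap.ker φ) + 1 = Module.finrank k U := by
  have surjective : Function.Surjective (φ.domRestrict U) :=
    LinearMap.surjective fun h ↦ hφ (LinearMap.congr_fun h ⟨w, hw⟩)
  have rank_nullity := (φ.domRestrict U).finrank_range_add_finrank_ker
  rw [LinearMap.range_eq_top.2 surjective, finrank_top, Module.finrank_self,
    LinearMap.ker_domRestrict, ← Submodule.finrank_map_subtype_eq U,
    Submodule.map_comap_subtype] at rank_nullity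
  rw [add_comm, rank_nullity]

lemma apply_eq_zero_of_mem_of_inf_ker {V : Type*} [AddCommGroup V] [Module k V]
    {U : Submodule k V} {w : V} (hw : w ∈ U) {φ ψ : Module.Dual k V} (hφ : φ w ≠ 0)
    (hψ : ∀ u ∈ U ⊓ LinearMap.ker φ, ψ u = 0) (hψw : ψ w = 0) {u : V} (hu : u ∈ U) : ψ u = 0 := by
  have hmem : φ w • u - φ u • w ∈ U ⊓ LinearMap.ker φ :=
    ⟨U.sub_mem (U.smul_mem _ hu) (U.smul_mem _ hw), by
      simp [mul_comm]⟩
  simpa [hψw, hφ] using hψ _ hmem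

-- If `w` is proportional to `v`, this is Euler's identity; otherwise `φ` can be chosen to vanish
-- at `v`, so that the condition on `H` contains `H(v) = 0`.
lemma exists_dual_differential_mul_linearForm [CharZero k] {n f : ℕ} (hf : f ≠ 0)
    {v w : Fin (n + 1) → k} (hw : w ≠ 0) {U : Submodule k (Fin (n + 1) → k)}
    (hv : v ∈ U) :
    ∃ φ : Module.Dual k (Fin (n + 1) → k), φ w ≠ 0 ∧ ∃ κ : k, κ ≠ 0 ∧
      ∀ H : MvPolynomial (Fin (n + 1)) k, H.IsHomogeneous f →
        (∀ u ∈ U ⊓ LinearMap.ker φ, differential v H u = 0) →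
        ∀ g, differential v (H * linearForm g) w = κ * g v * differential v H w := by
  have hf' : (f : k) ≠ 0 := Nat.cast_ne_zero.2 hf
  by_cases hwv : w ∈ k ∙ v
  · obtain ⟨a, rfl⟩ := Submodule.mem_span_singleton.1 hwv
    obtain ⟨φ, hφ⟩ := Module.Projective.exists_dual_ne_zero k hw
    refine ⟨φ, hφ, (f + 1) / f, div_ne_zero (Nat.cast_add_one_ne_zero f) hf', fun H hH _ g ↦ ?_⟩
    rw [map_smul, map_smul, differential_apply_self (hH.mul (isHomogeneous_linearForm g)),
      differential_apply_self hH, map_mul, eval_linearForm]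
    simp only [smul_eq_mul]
    push_cast
    field_simp
  · obtain ⟨φ, hφ, hφv⟩ := Submodule.exists_le_ker_of_notMem hwv
    refine ⟨φ, hφ, 1, one_ne_zero, fun H hH hHU g ↦ ?_⟩
    have hHv : eval v H = 0 := eval_eq_zero_of_differential_apply_self_eq_zero hf hH
      (hHU v ⟨hv, hφv (Submodule.mem_span_singleton_self v)⟩)
    rw [differential_mul_apply, hHv, zero_mul, zero_add, eval_linearForm, one_mul]

lemma exists_subset_card_eq_forall_exists_dual {n : ℕ} {A : Finset (ProjSpace k n)}
    (hA : Spans k n A) :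
    ∃ Q ⊆ A, Q.card = n + 1 ∧ ∀ s ∈ Q, ∃ f : Module.Dual k (Fin (n + 1) → k),
      f s.rep ≠ 0 ∧ ∀ q ∈ Q, q ≠ s → f q.rep = 0 := by
  obtain ⟨Q, hQA, -, hAQ, hQ⟩ := exists_linearIndepOn_extension
    (linearIndepOn_empty k (Projectivization.rep : ProjSpace k n → _))
    (Set.empty_subset (A : Set (ProjSpace k n)))
  lift Q to Finset (ProjSpace k n) using A.finite_toSet.subset hQA
  have span_eq_top : Submodule.span k (Projectivization.rep '' (Q : Set (ProjSpace k n))) = ⊤ :=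
    top_le_iff.1 (hA ▸ Submodule.span_le.2 hAQ)
  refine ⟨Q, by exact_mod_cast hQA, ?_, fun s hs ↦ ?_⟩
  · have finrank_span := finrank_span_eq_card hQ
    rw [← Set.image_eq_range, span_eq_top, finrank_top, Module.finrank_fin_fun] at finrank_span
    simpa using finrank_span.symm
  · obtain ⟨f, hfs, hf⟩ := Submodule.exists_le_ker_of_notMem
      (linearIndepOn_iff_notMem_span.1 hQ s hs)
    exact ⟨f, hfs, fun q hq hqs ↦ hf (Submodule.subset_span ⟨q, ⟨hq, hqs⟩, rfl⟩)⟩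

lemma differential_eq_zero_of_isRelation {n f : ℕ} {S Q : Finset (ProjSpace k n)} (hQS : Q ⊆ S)
    {H : MvPolynomial (Fin (n + 1)) k} (hH : H.IsHomogeneous f)
    {w : ProjSpace k n → Fin (n + 1) → k} (hw : IsRelation (f + 1) S w)
    (hHS : ∀ t ∈ S, t ∉ Q → eval t.rep H = 0 ∧ differential t.rep H (w t) = 0)
    {κ : ProjSpace k n → k} (hHQ : ∀ t ∈ Q, ∀ g,
      differential t.rep (H * linearForm g) (w t) = κ t * g t.rep * differential t.rep H (w t))
    {s : ProjSpace k n} (hs : s ∈ Q) (hκ : κ s ≠ 0) {g : Module.Dual k (Fin (n + 1) → k)}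
    (hgs : g s.rep ≠ 0) (hgQ : ∀ q ∈ Q, q ≠ s → g q.rep = 0) :
    differential s.rep H (w s) = 0 := by
  have relation := hw (H * linearForm g) (hH.mul (isHomogeneous_linearForm g))
  rw [Finset.sum_eq_single_of_mem s (hQS hs), hHQ s hs] at relation
  · simpa [hκ, hgs] using relation
  · intro t ht hts
    by_cases htQ : t ∈ Q
    · rw [hHQ t htQ, hgQ t htQ hts, mul_zero, zero_mul]
    · rw [differential_mul_apply, (hHS t ht htQ).1, (hHS t ht htQ).2, zero_mul, mul_zero, add_zero]

lemma sum_add_card_eq_sum {ι : Type*} {Q S : Finset ι} (hQS : Q ⊆ S) {g h : ι → ℕ}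
    (hQ : ∀ s ∈ Q, g s + 1 = h s) (hS : ∀ s ∈ S, s ∉ Q → g s = h s) :
    ∑ s ∈ S, g s + Q.card = ∑ s ∈ S, h s := by
  classical
  rw [← Finset.sum_sdiff hQS (f := g), ← Finset.sum_sdiff hQS (f := h), add_assoc,
    Finset.card_eq_sum_ones, ← Finset.sum_add_distrib, Finset.sum_congr rfl hQ,
    Finset.sum_congr rfl fun s hs ↦ hS s (Finset.mem_sdiff.1 hs).1 (Finset.mem_sdiff.1 hs).2]

variable {c : MvPolynomial (Fin 3) k} {f : ℕ}
  {S : Finset (ProjSpace k 2)} {T : ProjSpace k 2 → Submodule k (Fin 3 → k)}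

lemma exists_not_dvd_forall_differential_eq_zero (hc : c ≠ 0) (hc3 : c.IsHomogeneous 3)
    (hf : 3 ≤ f) (hT : ∑ s ∈ S, Module.finrank k (T s) ≤ 3 * f + 2)
    {Q : Finset (ProjSpace k 2)} (hQS : Q ⊆ S) (hQcard : Q.card = 3)
    {φ : ProjSpace k 2 → Module.Dual k (Fin 3 → k)} (hφ : ∀ s ∈ Q, ∃ u ∈ T s, φ s u ≠ 0) :
    ∃ H : MvPolynomial (Fin 3) k, H.IsHomogeneous f ∧ ¬ c ∣ H ∧
      (∀ s ∈ Q, ∀ u ∈ T s ⊓ LinearMap.ker (φ s), differential s.rep H u = 0) ∧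
      ∀ s ∈ S, s ∉ Q → ∀ u ∈ T s, differential s.rep H u = 0 := by
  classical
  obtain ⟨j, rfl⟩ := Nat.exists_eq_add_of_le hf
  let U := Q.piecewise (fun s ↦ T s ⊓ LinearMap.ker (φ s)) T
  have U_of_mem (s) (hs : s ∈ Q) : U s = T s ⊓ LinearMap.ker (φ s) :=
    Q.piecewise_eq_of_mem _ _ hs
  have U_of_notMem (s) (hs : s ∉ Q) : U s = T s := Q.piecewise_eq_of_notMem _ _ hs
  have count : ∑ s ∈ S, Module.finrank k (U s) + Q.card = ∑ s ∈ S, Module.finrank k (T s) := by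
    refine sum_add_card_eq_sum hQS (fun s hs ↦ ?_) fun s _ hs ↦ by rw [U_of_notMem s hs]
    obtain ⟨u, hu, hφu⟩ := hφ s hs
    rw [U_of_mem s hs, finrank_inf_ker_add_one hu hφu]
  have room : ∑ s ∈ S, Module.finrank k (U s) + (2 + j).choose 2 < (2 + (3 + j)).choose 2 := by
    have := choose_two_add_three j
    omega
  obtain ⟨H, hH, hcH⟩ := exists_mem_tangentForms_not_dvd hc hc3 room
  exact ⟨H, hH.1, hcH, fun s hs u hu ↦ hH.2 s (hQS hs) u (U_of_mem s hs ▸ hu),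
    fun s hs hsQ u hu ↦ hH.2 s hs u (U_of_notMem s hsQ ▸ hu)⟩

variable [CharZero k]

-- Four points of the support would contain three spanning the plane. Dropping one condition at each
-- of these leaves a form `H` of degree `f` not divisible by `c`; multiplying `H` by lines through
-- two of the three points turns the relation into the dropped conditions, so `H` meets `c` more
-- often than Bézout's theorem allows.
theorem card_le_three_of_isRelation (hc : Prime c) (hf : 3 ≤ f) (hT : ∀ s ∈ S, s.rep ∈ T s)
    (hcT : c ∈ tangentForms 3 S T) (hlower : 3 * f < ∑ s ∈ S, Module.finrank k (T s))
    (hupper : ∑ s ∈ S, Module.finrank k (T s) ≤ 3 * f + 2)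
    {w : ProjSpace k 2 → Fin 3 → k} (hwT : ∀ s ∈ S, w s ∈ T s) (hw : IsRelation (f + 1) S w)
    {A : Finset (ProjSpace k 2)} (hAS : A ⊆ S) (hwA : ∀ s ∈ A, w s ≠ 0) : A.card ≤ 3 := by
  by_contra! hcard
  have hf0 : f ≠ 0 := by omega
  obtain ⟨Q, hQA, hQcard, hQdual⟩ := exists_subset_card_eq_forall_exists_dual <|
    spans_of_degree_lt_card hc hcT.1 (by norm_num) (fun s hs ↦
      eval_eq_zero_of_mem_tangentForms three_ne_zero hcT (hAS hs) (hT s (hAS hs))) hcard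
  have hQS : Q ⊆ S := hQA.trans hAS
  choose! φ hφ κ hκ hmul using fun s hs ↦
    exists_dual_differential_mul_linearForm hf0 (hwA s (hQA hs)) (hT s (hQS hs))
  obtain ⟨H, hH, hcH, hHQ, hHS⟩ := exists_not_dvd_forall_differential_eq_zero hc.ne_zero hcT.1
    hf hupper hQS hQcard fun s hs ↦ ⟨w s, hwT s (hQS hs), hφ s hs⟩
  have hHw (s) (hs : s ∈ Q) : differential s.rep H (w s) = 0 := by
    obtain ⟨g, hgs, hgQ⟩ := hQdual s hs
    exact differential_eq_zero_of_isRelation hQS hH hw (fun t ht htQ ↦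
      ⟨eval_eq_zero_of_differential_apply_self_eq_zero hf0 hH (hHS t ht htQ _ (hT t ht)),
        hHS t ht htQ _ (hwT t ht)⟩)
      (fun t ht ↦ hmul t ht H hH (hHQ t ht)) hs (hκ s hs) hgs hgQ
  have hHT : H ∈ tangentForms f S T := by
    refine ⟨hH, fun s hs u hu ↦ ?_⟩
    by_cases hsQ : s ∈ Q
    · exact apply_eq_zero_of_mem_of_inf_ker (hwT s hs) (hφ s hsQ) (hHQ s hsQ) (hHw s hsQ) hu
    · exact hHS s hs hsQ u hu
  exact hlower.not_ge (sum_finrank_le_mul_of_not_dvd hc three_ne_zero hf0 hT hcT hHT hcH)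

end CayleyBacharach

section SmoothPoints

variable {k : Type*} [Field k]

/-- `s` is a point of the hypersurface `c = 0` at which the differential of `c` does not vanish. -/
def IsSmoothPoint {n : ℕ} (c : MvPolynomial (Fin (n + 1)) k) (s : ProjSpace k n) : Prop :=
  eval s.rep c = 0 ∧ differential s.rep c ≠ 0

lemma isSmoothPoint_of_isSmoothPlaneCurve {e : ℕ} {c : MvPolynomial (Fin 3) k}
    (hc : IsSmoothPlaneCurve k e c) {s : ProjSpace k 2} (hs : s ∈ projZeroLocus k 2 c) :
    IsSmoothPoint c s := by
  refine ⟨hs, fun h ↦ ?_⟩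
  obtain ⟨i, hi⟩ := hc.2.2 s.rep s.rep_nonzero hs
  exact hi (by rw [← differential_single, h, LinearMap.zero_apply])

/-- The kernel of the differential of `c` at `s`: at a smooth point of `c = 0` this is the affine
cone over the projective tangent space. -/
noncomputable def tangentSpace {n : ℕ} (c : MvPolynomial (Fin (n + 1)) k) (s : ProjSpace k n) :
    Submodule k (Fin (n + 1) → k) :=
  LinearMap.ker (differential s.rep c)

lemma span_rep_le_tangentSpace {n e : ℕ} {c : MvPolynomial (Fin (n + 1)) k}
    (hc : c.IsHomogeneous e) {s : ProjSpace k n} (hs : IsSmoothPoint c s) :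
    k ∙ s.rep ≤ tangentSpace c s := by
  rw [Submodule.span_singleton_le_iff_mem, tangentSpace, LinearMap.mem_ker,
    differential_apply_self hc, hs.1, mul_zero]

lemma finrank_tangentSpace {n : ℕ} {c : MvPolynomial (Fin (n + 1)) k} {s : ProjSpace k n}
    (hs : IsSmoothPoint c s) : Module.finrank k (tangentSpace c s) = n := by
  have rank_nullity := Module.Dual.finrank_ker_add_one_of_ne_zero hs.2
  rw [Module.finrank_fin_fun] at rank_nullity
  exact Nat.add_right_cancel rank_nullity

lemma IsRelation.filter_ne_zero {n d : ℕ} {S : Finset (ProjSpace k n)}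
    {w : ProjSpace k n → Fin (n + 1) → k} [DecidablePred (w · ≠ 0)] (hw : IsRelation d S w) :
    IsRelation d (S.filter (w · ≠ 0)) w := by
  intro F hF
  rw [Finset.sum_filter_of_ne, hw F hF]
  intro s _ hs hws
  exact hs (by rw [hws, map_zero])

variable [CharZero k] {c : MvPolynomial (Fin 3) k} {f : ℕ} {S : Finset (ProjSpace k 2)}
  {T T' : ProjSpace k 2 → Submodule k (Fin 3 → k)}

lemma independentConditions_of_forall_card_le_three (hc : Prime c) (hc3 : c.IsHomogeneous 3)
    (hf : 3 ≤ f) (hT : ∀ s ∈ S, s.rep ∈ T s) (hcT : ∀ s ∈ S, T s ≤ tangentSpace c s)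
    (hlower : 3 * f < ∑ s ∈ S, Module.finrank k (T s))
    (hupper : ∑ s ∈ S, Module.finrank k (T s) ≤ 3 * f + 2) (hT' : ∀ s ∈ S, T' s ≤ T s)
    (hsmall : ∀ A : Finset (ProjSpace k 2), A.card ≤ 3 → IndependentConditions (f + 1) A T') :
    IndependentConditions (f + 1) S T' := by
  classical
  intro w hwT' hw s hs
  by_contra hws
  have card_le := card_le_three_of_isRelation hc hf hT ⟨hc3, fun s hs u hu ↦ hcT s hs hu⟩ hlower
    hupper (fun s hs ↦ hT' s hs (hwT' s hs)) hw (Finset.filter_subset (w · ≠ 0) S)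
    (fun s hs ↦ (Finset.mem_filter.1 hs).2)
  exact hws (hsmall _ card_le w (fun s hs ↦ hwT' s (Finset.mem_filter.1 hs).1) hw.filter_ne_zero s
    (Finset.mem_filter.2 ⟨hs, hws⟩))

lemma independentConditions_span_rep_of_isSmoothPoint (hc : Prime c) (hc3 : c.IsHomogeneous 3)
    (hf : 3 ≤ f) (hS : ∀ s ∈ S, IsSmoothPoint c s) (hcard : S.card ≤ 3 * f + 2)
    (hcard' : 3 * f + 2 ≤ 2 * S.card) : IndependentConditions (f + 1) S fun s ↦ k ∙ s.rep := by
  classical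
  -- Doubling some of the points along the curve brings the number of conditions to `3 * f + 2`.
  obtain ⟨D, hDS, hDcard⟩ :=
    Finset.exists_subset_card_eq (show 3 * f + 2 - S.card ≤ S.card by omega)
  let T : ProjSpace k 2 → Submodule k (Fin 3 → k) :=
    D.piecewise (tangentSpace c) fun s ↦ k ∙ s.rep
  have T_of_mem (s) (hs : s ∈ D) : T s = tangentSpace c s := D.piecewise_eq_of_mem _ _ hs
  have T_of_notMem (s) (hs : s ∉ D) : T s = k ∙ s.rep := D.piecewise_eq_of_notMem _ _ hs
  have span_le (s) (hs : s ∈ S) : k ∙ s.rep ≤ T s := by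
    by_cases hsD : s ∈ D
    · exact T_of_mem s hsD ▸ span_rep_le_tangentSpace hc3 (hS s hs)
    · exact (T_of_notMem s hsD).ge
  have le_tangentSpace (s) (hs : s ∈ S) : T s ≤ tangentSpace c s := by
    by_cases hsD : s ∈ D
    · exact (T_of_mem s hsD).le
    · exact T_of_notMem s hsD ▸ span_rep_le_tangentSpace hc3 (hS s hs)
  have count : ∑ _s ∈ S, 1 + D.card = ∑ s ∈ S, Module.finrank k (T s) := by
    refine sum_add_card_eq_sum hDS (fun s hs ↦ ?_) fun s _ hs ↦ ?_
    · rw [T_of_mem s hs, finrank_tangentSpace (hS s (hDS hs))]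
    · rw [T_of_notMem s hs, finrank_span_singleton s.rep_nonzero]
  rw [← Finset.card_eq_sum_ones] at count
  exact independentConditions_of_forall_card_le_three hc hc3 hf
    (fun s hs ↦ span_le s hs (Submodule.mem_span_singleton_self _)) le_tangentSpace
    (by omega) (by omega) span_le
    fun A hA ↦ independentConditions_span_rep f.succ_ne_zero (by omega)

lemma independentConditions_tangentSpace (hc : Prime c) (hc3 : c.IsHomogeneous 3) (hf : 4 ≤ f)
    (hS : ∀ s ∈ S, IsSmoothPoint c s) (hlower : 3 * f < 2 * S.card)
    (hupper : 2 * S.card ≤ 3 * f + 2) : IndependentConditions (f + 1) S (tangentSpace c) := by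
  have count : ∑ s ∈ S, Module.finrank k (tangentSpace c s) = 2 * S.card := by
    rw [Finset.sum_congr rfl fun s hs ↦ finrank_tangentSpace (hS s hs), Finset.sum_const,
      smul_eq_mul, mul_comm]
  exact independentConditions_of_forall_card_le_three hc hc3 (by omega)
    (fun s hs ↦ span_rep_le_tangentSpace hc3 (hS s hs) (Submodule.mem_span_singleton_self _))
    (fun _ _ ↦ le_rfl) (hlower.trans_eq count.symm) (count.trans_le hupper) (fun _ _ ↦ le_rfl)
    fun A hA ↦ independentConditions_of_two_mul_card_le (by omega) _

-- Multiples of `c` only see the normal components of a relation, as a relation between simple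
-- points; once these vanish, the relation is tangent to the curve.
theorem independentConditions_top (hc : Prime c) (hc3 : c.IsHomogeneous 3) {d : ℕ} (hd : 7 ≤ d)
    (hS : ∀ s ∈ S, IsSmoothPoint c s) (hlower : 3 * d < 2 * S.card + 3)
    (hupper : 2 * S.card < 3 * d) : IndependentConditions d S fun _ ↦ ⊤ := by
  intro w _ hw
  obtain ⟨j, rfl⟩ : ∃ j, d = 3 + (j + 1) := ⟨d - 4, by omega⟩
  have normal_relation :
      IsRelation (j + 1) S fun s ↦ differential s.rep c (w s) • s.rep := by
    intro G hG
    have relation := hw (c * G) (hc3.mul hG)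
    simp_rw [map_smul, differential_apply_self hG, smul_eq_mul]
    calc ∑ s ∈ S, differential s.rep c (w s) * (↑(j + 1) * eval s.rep G)
        = ↑(j + 1) * ∑ s ∈ S, differential s.rep (c * G) (w s) := by
          rw [Finset.mul_sum]
          refine Finset.sum_congr rfl fun s hs ↦ ?_
          rw [differential_mul_apply, (hS s hs).1]
          ring
      _ = 0 := by rw [relation, mul_zero]
  have normal_eq_zero := independentConditions_span_rep_of_isSmoothPoint hc hc3 (by omega) hS
    (by omega) (by omega) _
    (fun s _ ↦ Submodule.smul_mem _ _ (Submodule.mem_span_singleton_self _)) normal_relation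
  refine independentConditions_tangentSpace (f := 3 + j) hc hc3 (by omega) hS (by omega) (by omega)
    w (fun s hs ↦ ?_) hw
  exact (smul_eq_zero.1 (normal_eq_zero s hs)).resolve_right s.rep_nonzero

lemma choose_le_h0_add_card {n e j : ℕ} (hj : j ≠ 0) {c : MvPolynomial (Fin (n + 1)) k}
    (hc0 : c ≠ 0) (hc : c.IsHomogeneous e) {S : Finset (ProjSpace k n)}
    (hS : ∀ s ∈ S, eval s.rep c = 0) :
    (n + j).choose n ≤ h0 k n (e + j) S + S.card := by
  have map_le : (tangentForms j S fun s ↦ k ∙ s.rep).map (LinearMap.mulLeft k c) ≤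
      tangentForms (e + j) S fun _ ↦ ⊤ := by
    rintro _ ⟨G, hG, rfl⟩
    refine ⟨hc.mul hG.1, fun s hs w _ ↦ ?_⟩
    have hGs := eval_eq_zero_of_mem_tangentForms hj hG hs (Submodule.mem_span_singleton_self _)
    rw [LinearMap.mulLeft_apply, differential_mul_apply, hS s hs, hGs, zero_mul, zero_mul, add_zero]
  have finrank_le := Submodule.finrank_mono map_le
  rw [← h0_eq_finrank_tangentForms (by omega), ← (Submodule.equivMapOfInjective
    (LinearMap.mulLeft k c) (mul_right_injective₀ hc0) _).finrank_eq] at finrank_le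
  have count := choose_le_finrank_tangentForms_add_sum (d := j) (S := S) (T := fun s ↦ k ∙ s.rep)
  simp only [finrank_span_singleton (Projectivization.rep_nonzero _), Finset.sum_const,
    smul_eq_mul, mul_one] at count
  omega

lemma h0_pos_and_h1_pos {d : ℕ} (hc0 : c ≠ 0) (hc3 : c.IsHomogeneous 3)
    (hS : ∀ s ∈ S, eval s.rep c = 0) (hd : 7 ≤ d) (hcard : 2 * S.card = 3 * d + 1) :
    0 < h0 k 2 d S ∧ 0 < h1 k 2 d S := by
  obtain ⟨i, rfl⟩ : ∃ i, d = 3 + (3 + i) := ⟨d - 6, by omega⟩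
  have lower := choose_le_h0_add_card (by omega : 3 + i ≠ 0) hc0 hc3 hS
  have := choose_two_add_three i
  have := choose_two_add_three (3 + i)
  rw [h1]
  push_cast
  omega

end SmoothPoints

section Irreducibility

lemma homogeneousComponent_mul_totalDegree {R σ : Type*} [CommSemiring R] (A B : MvPolynomial σ R) :
    homogeneousComponent (A.totalDegree + B.totalDegree) (A * B) =
      homogeneousComponent A.totalDegree A * homogeneousComponent B.totalDegree B := by
  conv_lhs => enter [2]; rw [← sum_homogeneousComponent A, ← sum_homogeneousComponent B]
  simp_rw [Finset.sum_mul_sum, map_sum, homogeneousComponent_of_mem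
    ((homogeneousComponent_isHomogeneous _ A).mul (homogeneousComponent_isHomogeneous _ B))]
  rw [Finset.sum_eq_single_of_mem A.totalDegree (Finset.self_mem_range_succ _),
    Finset.sum_eq_single_of_mem B.totalDegree (Finset.self_mem_range_succ _), if_pos rfl]
  · intro j _ hj
    exact if_neg (by omega)
  · intro i hi hiA
    refine Finset.sum_eq_zero fun j hj ↦ if_neg ?_
    rw [Finset.mem_range] at hi hj
    omega

lemma eval_smul_of_isHomogeneous {R σ : Type*} [CommSemiring R] {F : MvPolynomial σ R} {d : ℕ}
    (hF : F.IsHomogeneous d) (a : R) (v : σ → R) : eval (a • v) F = a ^ d * eval v F := by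
  rw [eval_eq, eval_eq, Finset.mul_sum]
  refine Finset.sum_congr rfl fun m hm ↦ ?_
  have degree_eq : d = ∑ i ∈ m.support, m i := hF.degree_eq_sum_deg_support hm
  simp only [Pi.smul_apply, smul_eq_mul, mul_pow, Finset.prod_mul_distrib]
  rw [Finset.prod_pow_eq_pow_sum, ← degree_eq, mul_left_comm]

variable {k σ : Type*} [Field k]

lemma totalDegree_ne_zero_of_not_isUnit {A : MvPolynomial σ k} (hA0 : A ≠ 0) (hA : ¬ IsUnit A) :
    A.totalDegree ≠ 0 := by
  intro h
  rw [totalDegree_eq_zero_iff_eq_C] at h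
  rw [h, ne_eq, C_eq_zero] at hA0
  exact hA (h ▸ (Ne.isUnit hA0).map C)

lemma exists_isHomogeneous_eq_mul_of_not_irreducible {c : MvPolynomial σ k} {d : ℕ} (hd : d ≠ 0)
    (hc0 : c ≠ 0) (hcd : c.IsHomogeneous d) (hc : ¬ Irreducible c) :
    ∃ a b, a ≠ 0 ∧ b ≠ 0 ∧ a + b = d ∧ ∃ A B : MvPolynomial σ k,
      A.IsHomogeneous a ∧ B.IsHomogeneous b ∧ c = A * B := by
  have degree_c := hcd.totalDegree hc0
  have not_isUnit : ¬ IsUnit c := fun h ↦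
    hd (degree_c.symm.trans (isUnit_iff_totalDegree_of_isReduced.1 h).2)
  obtain ⟨A, B, hA, hB, rfl⟩ := (irreducible_or_factor not_isUnit).resolve_left hc
  obtain ⟨hA0, hB0⟩ := mul_ne_zero_iff.1 hc0
  rw [totalDegree_mul_of_isDomain hA0 hB0] at degree_c
  refine ⟨_, _, totalDegree_ne_zero_of_not_isUnit hA0 hA, totalDegree_ne_zero_of_not_isUnit hB0 hB,
    degree_c, _, _, homogeneousComponent_isHomogeneous _ A, homogeneousComponent_isHomogeneous _ B,
    ?_⟩
  rw [← homogeneousComponent_mul_totalDegree, degree_c, homogeneousComponent_eq_self hcd]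

lemma exists_eq_linearForm_mul_of_not_irreducible [Fintype σ] [DecidableEq σ]
    {c : MvPolynomial σ k} (hc0 : c ≠ 0) (hc3 : c.IsHomogeneous 3) (hc : ¬ Irreducible c) :
    ∃ f Q, Q.IsHomogeneous 2 ∧ c = linearForm f * Q := by
  obtain ⟨a, b, ha, hb, hab, A, B, hA, hB, rfl⟩ :=
    exists_isHomogeneous_eq_mul_of_not_irreducible three_ne_zero hc0 hc3 hc
  obtain ⟨rfl, rfl⟩ | ⟨rfl, rfl⟩ : a = 1 ∧ b = 2 ∨ a = 2 ∧ b = 1 := by omega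
  · exact ⟨_, B, hB, by rw [linearForm_differential_zero hA]⟩
  · exact ⟨_, A, hA, by rw [linearForm_differential_zero hB, mul_comm]⟩

lemma eval_add_smul_eq_of_forall_ne_zero [IsAlgClosed k] {F : MvPolynomial σ k} {p q : σ → k}
    (hF : ∀ t : k, eval (p + t • q) F ≠ 0) (t : k) : eval (p + t • q) F = eval p F := by
  let P : Polynomial k := aeval (fun i ↦ Polynomial.C (p i) + Polynomial.C (q i) * Polynomial.X) F
  have eval_P (t : k) : P.eval t = eval (p + t • q) F := by
    rw [← Polynomial.coe_aeval_eq_eval, comp_aeval_apply, aeval_eq_eval]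
    congr 2
    ext i
    rw [map_add, map_mul, Polynomial.aeval_C, Polynomial.aeval_C, Polynomial.aeval_X, mul_comm]
    rfl
  have degree_P : P.degree = 0 := by
    by_contra hdegree
    obtain ⟨t, ht⟩ := IsAlgClosed.exists_root P hdegree
    exact hF t (eval_P t ▸ ht)
  have eval_zero := eval_P 0
  rw [zero_smul, add_zero] at eval_zero
  rw [← eval_P, ← eval_zero, Polynomial.eq_C_of_degree_eq_zero degree_P, Polynomial.eval_C,
    Polynomial.eval_C]

lemma exists_mem_ne_zero_eval_eq_zero [IsAlgClosed k] {W : Submodule k (σ → k)}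
    (hW : 1 < Module.finrank k W) {e : ℕ} (he : e ≠ 0) {F : MvPolynomial σ k}
    (hF : F.IsHomogeneous e) : ∃ v ∈ W, v ≠ 0 ∧ eval v F = 0 := by
  classical
  by_contra! hFW
  have : Nontrivial W := Module.nontrivial_of_finrank_pos (R := k) (by omega)
  obtain ⟨⟨p, hpW⟩, hp⟩ := exists_ne (0 : W)
  obtain ⟨⟨q, hqW⟩, hpq⟩ := exists_linearIndependent_pair_of_one_lt_finrank hW hp
  rw [LinearIndependent.pair_iff] at hpq
  have ne_zero (a b : k) (hab : ¬ (a = 0 ∧ b = 0)) : eval (a • p + b • q) F ≠ 0 :=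
    hFW _ (W.add_mem (W.smul_mem a hpW) (W.smul_mem b hqW)) fun h ↦
      hab (hpq a b (Subtype.ext h))
  have along_q (t : k) : eval (p + t • q) F = eval p F :=
    eval_add_smul_eq_of_forall_ne_zero (fun t ↦ by simpa using ne_zero 1 t (by simp)) t
  have along_p (t : k) : eval (q + t • p) F = eval q F :=
    eval_add_smul_eq_of_forall_ne_zero (fun t ↦ by simpa [add_comm] using ne_zero t 1 (by simp)) t
  obtain ⟨b, hb⟩ := Infinite.exists_notMem_finset ({0, 1} : Finset k)
  simp only [Finset.mem_insert, Finset.mem_singleton, not_or] at hb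
  obtain ⟨a, rfl⟩ := IsAlgClosed.exists_pow_nat_eq b (Nat.pos_of_ne_zero he)
  have ha : a ≠ 0 := fun h ↦ hb.1 (by rw [h, zero_pow he])
  -- `F` is constant on both lines `p + k q` and `q + k p`, which contain the proportional vectors
  -- `p + a⁻¹ q` and `q + a p`.
  have scaling : eval q F = a ^ e * eval p F := by
    rw [← along_p a, ← along_q a⁻¹, ← eval_smul_of_isHomogeneous hF, smul_add, smul_smul,
      mul_inv_cancel₀ ha, one_smul, add_comm]
  have eval_p_eq_eval_q : eval q F = eval p F := by
    rw [← along_p 1, ← along_q 1, one_smul, one_smul, add_comm]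
  have eval_p_ne_zero : eval p F ≠ 0 := by simpa using ne_zero 1 0 (by simp)
  exact hb.2 (mul_right_cancel₀ eval_p_ne_zero (by rw [← scaling, eval_p_eq_eval_q, one_mul]))

theorem prime_of_isSmoothPlaneCurve_three [IsAlgClosed k] {c : MvPolynomial (Fin 3) k}
    (hc : IsSmoothPlaneCurve k 3 c) : Prime c := by
  obtain ⟨hc0, hc3, smooth⟩ := hc
  rw [← UniqueFactorizationMonoid.irreducible_iff_prime]
  by_contra hirr
  obtain ⟨f, Q, hQ, rfl⟩ := exists_eq_linearForm_mul_of_not_irreducible hc0 hc3 hirr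
  have finrank_ker : 1 < Module.finrank k (LinearMap.ker f) := by
    have rank_nullity := f.finrank_range_add_finrank_ker
    have := f.range.finrank_le
    rw [Module.finrank_fin_fun] at rank_nullity
    rw [Module.finrank_self] at this
    omega
  obtain ⟨v, hfv, hv, hQv⟩ := exists_mem_ne_zero_eval_eq_zero finrank_ker two_ne_zero hQ
  rw [LinearMap.mem_ker] at hfv
  obtain ⟨i, hi⟩ := smooth v hv (by rw [map_mul, hQv, mul_zero])
  exact hi (by rw [← differential_single, differential_mul_apply, eval_linearForm, hfv, hQv,
    zero_mul, zero_mul, add_zero])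

end Irreducibility

end Terracini

theorem smooth_cubic_points_minTerracini_general {k : Type*} [Field k] [CharZero k] {d : ℕ}
    (hd : 7 ≤ d) (hodd : Odd d) {c : MvPolynomial (Fin 3) k} (hc3 : c.IsHomogeneous 3)
    (hc : Prime c) {S : Finset (ProjSpace k 2)} (hS : ∀ s ∈ S, Terracini.IsSmoothPoint c s)
    (hcard : S.card = (3 * d + 1) / 2) : S ∈ minTerracini k 2 d ((3 * d + 1) / 2) := by
  classical
  have two_mul_card : 2 * S.card = 3 * d + 1 := by
    obtain ⟨m, rfl⟩ := hodd
    omega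
  have spans : Spans k 2 S := Terracini.spans_of_degree_lt_card hc hc3 (by norm_num)
    (fun s hs ↦ (hS s hs).1) (by omega)
  obtain ⟨h0_pos, h1_pos⟩ := Terracini.h0_pos_and_h1_pos hc.ne_zero hc3 (fun s hs ↦ (hS s hs).1)
    hd two_mul_card
  refine ⟨⟨hcard, spans, h0_pos, h1_pos⟩, fun A hA ↦ ?_⟩
  obtain ⟨s, hs, hAs⟩ := Finset.ssubset_iff_exists_subset_erase.1 hA
  have card_erase := Finset.card_erase_of_mem hs
  exact Terracini.h1_eq_zero_of_independentConditions (by omega) <|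
    (Terracini.independentConditions_top hc hc3 hd (fun t ht ↦ hS t (Finset.mem_of_mem_erase ht))
      (by omega) (by omega)).subset hAs

/-- Example: for odd `d ≥ 7` and `x = (3d+1)/2`, any set of `x` points on a smooth plane
cubic is minimally Terracini; in particular `T(2,d;(3d+1)/2)' ≠ ∅`. -/
theorem smooth_cubic_points_minTerracini
    (k : Type*) [Field k] [IsAlgClosed k] [CharZero k]
    (d : ℕ) (hd : 7 ≤ d) (hodd : Odd d)
    (c : MvPolynomial (Fin 3) k) (hc : IsSmoothPlaneCurve k 3 c)
    (S : Finset (ProjSpace k 2)) (hS : ↑S ⊆ projZeroLocus k 2 c)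
    (hcard : S.card = (3 * d + 1) / 2) :
    S ∈ minTerracini k 2 d ((3 * d + 1) / 2) ∧
      (minTerracini k 2 d ((3 * d + 1) / 2)).Nonempty := by
  have main := smooth_cubic_points_minTerracini_general hd hodd hc.2.1
    (Terracini.prime_of_isSmoothPlaneCurve_three hc)
    (fun s hs ↦ Terracini.isSmoothPoint_of_isSmoothPlaneCurve hc (hS hs)) hcard
  exact ⟨main, S, main⟩
end
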